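/- Let η^mono be the Euclidean projection of ℝ^N onto the monotone cone M_N = {x ∈ ℝ^N : x_t ≤ x_{t+1} for all 1 ≤ t ≤ N−1}, and let r(ℓ) = E ‖η^mono(W)‖₂² for W ∼ N(0, I_ℓ) be its risk at zero in dimension ℓ. Let F_{N,ε,mono} be the set of Borel probability measures ν on ℝ^N supported on M_N with E_ν[#{t ∈ {1,…,N−1} : X_t < X_{t+1}}] ≤ Nε, and set M(F_{N,ε,mono}) = (1/N) sup_{ν∈F_{N,ε,mono}} E_ν ‖X − η^mono(X+Z)‖₂² (X ∼ ν, Z ∼ N(0,I_N) independent). Then: (i) the limit M(ε|MonoReg) = lim_{N→∞} M(F_{N,ε,mono}) exists and equals max{ ε Σ_{ℓ≥1} π_ℓ r(ℓ) : (π_ℓ)_{ℓ≥1} a probability distribution on the positive integers with Σ_{ℓ≥1} ℓ π_ℓ = 1/ε }; equivalently, the curve (1/ε, M(ε|MonoReg)/ε) is the least concave envelope of the point set {(ℓ, r(ℓ)) : ℓ ∈ ℕ, ℓ ≥ 1}; (ii) there exists ε₀ > 0 such that for all ε ∈ (0, ε₀], M(ε|MonoReg) ≤ 20 ε (log(1/ε))².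 -/

import Mathlib

open MeasureTheory ProbabilityTheory ENNReal Filter

noncomputable section

/-- The standard Gaussian measure `N(0, I_N)` on `ℝ^N`. -/
def stdGaussian (N : ℕ) : Measure (Fin N → ℝ) :=
  Measure.pi fun _ => gaussianReal 0 1

/-- The cone `M_N` of nondecreasing sequences in `ℝ^N`. -/
def monoCone (N : ℕ) : Set (Fin N → ℝ) := {x | Monotone x}

/-- The number of increase points of `x : ℝ^N`, i.e. of adjacent pairs
`(i, i+1)` with `x i < x (i+1)`. -/
def incCount (N : ℕ) (x : Fin N → ℝ) : ℕ :=
  Nat.card {p : Fin N × Fin N // (p.1 : ℕ) + 1 = (p.2 : ℕ) ∧ x p.1 < x p.2}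

/-- The class `F_{N,ε,mono}` of probability measures supported on the monotone
cone with expected number of increase points at most `Nε`. -/
def monoClass (N : ℕ) (ε : ℝ) : Set (Measure (Fin N → ℝ)) :=
  {ν | IsProbabilityMeasure ν ∧ ν (monoCone N)ᶜ = 0 ∧
    (∫⁻ x, (incCount N x : ℝ≥0∞) ∂ν) ≤ (N : ℝ≥0∞) * ENNReal.ofReal ε}

section
variable (η : ∀ ℓ : ℕ, (Fin ℓ → ℝ) → (Fin ℓ → ℝ))

/-- The risk at zero of monotone regression in dimension `ℓ`,
`r(ℓ) = E ‖η^mono(W)‖₂²`, `W ∼ N(0, I_ℓ)`. -/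
def riskAtZero (ℓ : ℕ) : ℝ≥0∞ :=
  ∫⁻ w, ENNReal.ofReal (∑ i, (η ℓ w i) ^ 2) ∂(stdGaussian ℓ)

/-- The worst-case per-coordinate MSE of monotone regression over
`F_{N,ε,mono}`:
`M(F_{N,ε,mono}) = (1/N) sup_{ν} E ‖X − η^mono(X+Z)‖₂²`. -/
def monoMSE (N : ℕ) (ε : ℝ) : ℝ≥0∞ :=
  (N : ℝ≥0∞)⁻¹ *
    ⨆ ν ∈ monoClass N ε,
      ∫⁻ p, ENNReal.ofReal (∑ i, (p.1 i - η N (p.1 + p.2) i) ^ 2)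
        ∂(ν.prod (stdGaussian N))

/-- The variational value
`sup { ε Σ_ℓ π_ℓ r(ℓ) : π a probability distribution on {1,2,…} with
Σ_ℓ ℓ π_ℓ = 1/ε }`. -/
def monoMinimaxVal (ε : ℝ) : ℝ≥0∞ :=
  ⨆ (π : ℕ → ℝ≥0∞) (_ : π 0 = 0 ∧ (∑' ℓ, π ℓ) = 1 ∧
      (∑' ℓ : ℕ, (ℓ : ℝ≥0∞) * π ℓ) = ENNReal.ofReal (1 / ε)),
    ENNReal.ofReal ε * ∑' ℓ, π ℓ * riskAtZero η ℓ

end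

section part1

def IsProj (N : ℕ) (f : (Fin N → ℝ) → (Fin N → ℝ)) : Prop :=
  ∀ y : Fin N → ℝ, f y ∈ monoCone N ∧
      ∀ x ∈ monoCone N, (∑ i, (y i - f y i) ^ 2) ≤ ∑ i, (y i - x i) ^ 2

lemma proj_var {N : ℕ} {f : (Fin N → ℝ) → (Fin N → ℝ)} (hf : IsProj N f)
    (y x : Fin N → ℝ) (hx : x ∈ monoCone N) :
    ∑ i, (y i - f y i) * (x i - f y i) ≤ 0 := by
  by_contra hP
  push Not at hP
  set P := ∑ i, (y i - f y i) * (x i - f y i) with hPdef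
  set Q := ∑ i, (x i - f y i) ^ 2 with hQdef
  have hQ : 0 ≤ Q := Finset.sum_nonneg fun i _ => sq_nonneg _
  obtain ⟨hm, hmin⟩ := hf y
  have key : ∀ t : ℝ, 0 ≤ t → t ≤ 1 → 2 * t * P ≤ t ^ 2 * Q := by
    intro t h0 h1
    have h2 : (fun i => f y i + t * (x i - f y i)) ∈ monoCone N := by
      intro i j hij
      have a1 : f y i ≤ f y j := hm hij
      have a2 : x i ≤ x j := hx hij
      simp only
      nlinarith
    have h3 := hmin _ h2
    have h4 : ∑ i, (y i - (f y i + t * (x i - f y i))) ^ 2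
        = ∑ i, (y i - f y i) ^ 2 - 2 * t * P + t ^ 2 * Q := by
      rw [hPdef, hQdef, Finset.mul_sum, Finset.mul_sum, ← Finset.sum_sub_distrib,
        ← Finset.sum_add_distrib]
      refine Finset.sum_congr rfl fun i _ => ?_
      ring
    simp only [h4] at h3
    linarith
  have h5 := key (P / (P + Q)) (by positivity) (by rw [div_le_one (by positivity)]; linarith)
  have h6 : 0 < P + Q := by positivity
  have h7 : 2 * (P / (P + Q)) * P = 2 * P ^ 2 * (P + Q) / (P + Q) ^ 2 := by field_simp
  have h8 : (P / (P + Q)) ^ 2 * Q = P ^ 2 * Q / (P + Q) ^ 2 := by field_simp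
  rw [h7, h8, div_le_div_iff_of_pos_right (by positivity)] at h5
  have : 0 < P ^ 2 * P := by positivity
  have : 0 ≤ P ^ 2 * Q := by positivity
  nlinarith

lemma proj_cone {N : ℕ} {f : (Fin N → ℝ) → (Fin N → ℝ)} (hf : IsProj N f)
    (y v : Fin N → ℝ) (hv : v ∈ monoCone N) :
    ∑ i, y i * v i ≤ ∑ i, f y i * v i := by
  have h := proj_var hf y (fun i => f y i + v i) (by
    intro i j hij
    exact add_le_add ((hf y).1 hij) (hv hij))
  simp only [add_sub_cancel_left, sub_mul, Finset.sum_sub_distrib] at h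
  linarith

lemma proj_self {N : ℕ} {f : (Fin N → ℝ) → (Fin N → ℝ)} (hf : IsProj N f)
    (y : Fin N → ℝ) : ∑ i, f y i ^ 2 ≤ ∑ i, y i * f y i := by
  have h := proj_var hf y (fun _ => 0) (fun i j _ => le_rfl)
  have : ∑ i, (y i - f y i) * (0 - f y i) = ∑ i, f y i ^ 2 - ∑ i, y i * f y i := by
    rw [← Finset.sum_sub_distrib]
    exact Finset.sum_congr rfl fun i _ => by ring
  linarith

lemma proj_unique {N : ℕ} {f : (Fin N → ℝ) → (Fin N → ℝ)} (hf : IsProj N f)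
    (y c : Fin N → ℝ) (hc : c ∈ monoCone N)
    (hmin : ∀ x ∈ monoCone N, (∑ i, (y i - c i) ^ 2) ≤ ∑ i, (y i - x i) ^ 2) :
    f y = c := by
  have h1 := proj_var hf y c hc
  have h2 := hmin (f y) (hf y).1
  have h3 : ∑ i, (y i - c i) ^ 2 = ∑ i, (y i - f y i) ^ 2
      - 2 * ∑ i, (y i - f y i) * (c i - f y i) + ∑ i, (c i - f y i) ^ 2 := by
    rw [Finset.mul_sum, ← Finset.sum_sub_distrib, ← Finset.sum_add_distrib]
    exact Finset.sum_congr rfl fun i _ => by ring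
  have h4 : ∑ i, (c i - f y i) ^ 2 ≤ 0 := by linarith
  have h5 : ∑ i, (c i - f y i) ^ 2 = 0 :=
    le_antisymm h4 (Finset.sum_nonneg fun i _ => sq_nonneg _)
  rw [Finset.sum_eq_zero_iff_of_nonneg (fun i _ => sq_nonneg _)] at h5
  funext i
  have := h5 i (Finset.mem_univ i)
  have := pow_eq_zero_iff (two_ne_zero) |>.1 this
  linarith

lemma sq_le_of_dot {ι : Type*} [Fintype ι] (g u : ι → ℝ)
    (h : ∑ i, u i ^ 2 ≤ ∑ i, g i * u i) : ∑ i, u i ^ 2 ≤ ∑ i, g i ^ 2 := by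
  have h1 : 0 ≤ ∑ i, (g i - u i) ^ 2 := Finset.sum_nonneg fun i _ => sq_nonneg _
  have h2 : ∑ i, (g i - u i) ^ 2 = ∑ i, g i ^ 2 - 2 * ∑ i, g i * u i + ∑ i, u i ^ 2 := by
    rw [Finset.mul_sum, ← Finset.sum_sub_distrib, ← Finset.sum_add_distrib]
    exact Finset.sum_congr rfl fun i _ => by ring
  linarith

/-- deterministic bound -/
lemma err_bound {N : ℕ} {f : (Fin N → ℝ) → (Fin N → ℝ)} (hf : IsProj N f)
    (x z g : Fin N → ℝ) (hx : x ∈ monoCone N)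
    (hg : ∀ v : Fin N → ℝ, (∀ i j : Fin N, (i : ℕ) + 1 = j → x i = x j → v i ≤ v j) →
      ∑ i, z i * v i ≤ ∑ i, g i * v i) :
    ∑ i, (x i - f (x + z) i) ^ 2 ≤ ∑ i, g i ^ 2 := by
  set u : Fin N → ℝ := fun i => f (x + z) i - x i with hu
  have h1 : ∑ i, u i ^ 2 ≤ ∑ i, g i * u i := by
    refine le_trans ?_ (hg u ?_)
    · have h := proj_var hf (x + z) x hx
      have : ∑ i, ((x + z) i - f (x + z) i) * (x i - f (x + z) i)
          = ∑ i, u i ^ 2 - ∑ i, z i * u i := by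
        rw [← Finset.sum_sub_distrib]
        refine Finset.sum_congr rfl fun i _ => ?_
        simp only [hu, Pi.add_apply]
        ring
      linarith
    · intro i j hij hxx
      have : f (x + z) i ≤ f (x + z) j := (hf (x + z)).1 (Fin.le_def.2 (by omega))
      simp only [hu]
      linarith
  have h2 := sq_le_of_dot g u h1
  calc _ = ∑ i, u i ^ 2 := Finset.sum_congr rfl fun i _ => by simp only [hu]; ring
    _ ≤ _ := h2

end part1

section part2

instance stdG_prob (n : ℕ) : IsProbabilityMeasure (_root_.stdGaussian n) := by
  unfold _root_.stdGaussian; infer_instance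

lemma stdG_eval (n : ℕ) (i : Fin n) :
    MeasurePreserving (fun w : Fin n → ℝ => w i) (_root_.stdGaussian n) (gaussianReal 0 1) :=
  measurePreserving_eval _ i

lemma stdG_indep (n : ℕ) :
    iIndepFun (fun (i : Fin n) (w : Fin n → ℝ) => w i) (_root_.stdGaussian n) :=
  iIndepFun_pi (X := fun _ x => x) (fun _ => aemeasurable_id)

lemma gauss_sq : ∫⁻ x, ENNReal.ofReal (x ^ 2) ∂(gaussianReal 0 1) = 1 := by
  have h : MemLp id 2 (gaussianReal 0 1) := memLp_id_gaussianReal' 2 (by simp)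
  have h2 : ∫ x, x ^ 2 ∂(gaussianReal 0 1) = 1 := by
    have h3 := variance_id_gaussianReal (μ := 0) (v := 1)
    rw [variance_eq_integral aemeasurable_id] at h3
    simpa [integral_id_gaussianReal] using h3
  have hi : Integrable (fun x : ℝ => x ^ 2) (gaussianReal 0 1) := h.integrable_sq
  rw [← ofReal_integral_eq_lintegral_ofReal hi (ae_of_all _ fun x => sq_nonneg _)]
  simp [h2]

lemma stdG_sq (n : ℕ) (i : Fin n) :
    ∫⁻ w, ENNReal.ofReal (w i ^ 2) ∂(_root_.stdGaussian n) = 1 := by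
  have := (stdG_eval n i).lintegral_comp (f := fun x => ENNReal.ofReal (x ^ 2)) (by fun_prop)
  rw [this, gauss_sq]

lemma stdG_sum_sq (n : ℕ) :
    ∫⁻ w, ENNReal.ofReal (∑ i, w i ^ 2) ∂(_root_.stdGaussian n) = n := by
  have : ∀ w : Fin n → ℝ, ENNReal.ofReal (∑ i, w i ^ 2) = ∑ i, ENNReal.ofReal (w i ^ 2) :=
    fun w => ENNReal.ofReal_sum_of_nonneg fun i _ => sq_nonneg _
  simp_rw [this]
  rw [lintegral_finsetSum _ (fun i _ => by fun_prop)]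
  simp [stdG_sq]

variable (η : ∀ ℓ : ℕ, (Fin ℓ → ℝ) → (Fin ℓ → ℝ))

lemma risk_le (hproj : ∀ ℓ, IsProj ℓ (η ℓ)) (n : ℕ) : riskAtZero η n ≤ n := by
  rw [← stdG_sum_sq n]
  unfold riskAtZero
  refine lintegral_mono fun w => ENNReal.ofReal_le_ofReal ?_
  exact sq_le_of_dot _ _ (proj_self (hproj n) w)

lemma risk_one (hproj : ∀ ℓ, IsProj ℓ (η ℓ)) : riskAtZero η 1 = 1 := by
  have h1 : ∀ w, η 1 w = w := fun w =>
    proj_unique (hproj 1) w w (Subsingleton.monotone w) (fun x _ => by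
      simp only [sub_self]
      simpa using sq_nonneg _)
  have := stdG_sum_sq 1
  unfold riskAtZero
  simp_rw [h1]
  simpa using this

/-- averaging pairs -/
def pairAvg (n : ℕ) (z : Fin (n * 2) → ℝ) : Fin n → ℝ := fun i =>
  (Real.sqrt 2)⁻¹ * (z (finProdFinEquiv (i, 0)) + z (finProdFinEquiv (i, 1)))

lemma pairAvg_mp (n : ℕ) :
    MeasurePreserving (pairAvg n) (_root_.stdGaussian (n * 2)) (_root_.stdGaussian n) := by
  have hmeas : Measurable (pairAvg n) := by
    unfold pairAvg; fun_prop
  refine ⟨hmeas, ?_⟩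
  let P : Measure (Fin n → ℝ × ℝ) :=
    Measure.pi fun _ => (gaussianReal 0 1).prod (gaussianReal 0 1)
  let B : (Fin n → ℝ × ℝ) → (Fin (n * 2) → ℝ) := fun y k =>
    if (finProdFinEquiv.symm k).2 = 0 then (y (finProdFinEquiv.symm k).1).1
    else (y (finProdFinEquiv.symm k).1).2
  have hB : Measurable B := by
    rw [measurable_pi_iff]
    intro k
    simp only [B]
    split_ifs <;> fun_prop
  have hs : ∀ g : Fin (n * 2) → ℝ≥0∞, ∏ k, g k = ∏ i : Fin n,
      (g (finProdFinEquiv (i, 0)) * g (finProdFinEquiv (i, 1))) := by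
    intro g
    rw [← finProdFinEquiv.prod_comp, Fintype.prod_prod_type]
    simp
  have hBmap : Measure.map B P = _root_.stdGaussian (n * 2) := by
    refine (Measure.pi_eq fun s hsm => ?_).symm
    rw [Measure.map_apply hB (MeasurableSet.univ_pi hsm), hs]
    have : B ⁻¹' (Set.univ.pi s) = Set.univ.pi (fun i =>
        s (finProdFinEquiv (i, 0)) ×ˢ s (finProdFinEquiv (i, 1))) := by
      ext y
      simp only [Set.mem_preimage, Set.mem_univ_pi, Set.mem_prod, B]
      constructor
      · intro h i
        have h0 := h (finProdFinEquiv (i, 0))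
        have h1 := h (finProdFinEquiv (i, 1))
        simp only [Equiv.symm_apply_apply] at h0 h1
        exact ⟨by simpa using h0, by simpa using h1⟩
      · intro h k
        obtain ⟨⟨i, j⟩, rfl⟩ := finProdFinEquiv.surjective k
        simp only [Equiv.symm_apply_apply]
        fin_cases j
        · simpa using (h i).1
        · simpa using (h i).2
    rw [this, Measure.pi_pi]
    simp [Measure.prod_prod]
  have hc : MeasurePreserving (fun p : ℝ × ℝ => (Real.sqrt 2)⁻¹ * (p.1 + p.2))
      ((gaussianReal 0 1).prod (gaussianReal 0 1)) (gaussianReal 0 1) := by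
    refine ⟨by fun_prop, ?_⟩
    have h4 : Measure.map (fun p : ℝ × ℝ => p.1 + p.2)
        ((gaussianReal 0 1).prod (gaussianReal 0 1)) = gaussianReal (0 + 0) (1 + 1) :=
      gaussianReal_conv_gaussianReal
    have h5 : (fun p : ℝ × ℝ => (Real.sqrt 2)⁻¹ * (p.1 + p.2)) =
      (fun x : ℝ => (Real.sqrt 2)⁻¹ * x) ∘ (fun p : ℝ × ℝ => p.1 + p.2) := rfl
    rw [h5, ← Measure.map_map (by fun_prop) (by fun_prop), h4, gaussianReal_map_const_mul]
    congr 1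
    · simp
    · ext
      simp
      norm_num
  have h6 := (measurePreserving_pi (fun _ : Fin n => (gaussianReal 0 1).prod (gaussianReal 0 1))
    (fun _ => gaussianReal 0 1) (fun _ => hc)).map_eq
  rw [← hBmap, Measure.map_map hmeas hB]
  have h7 : pairAvg n ∘ B = fun (a : Fin n → ℝ × ℝ) i =>
      (Real.sqrt 2)⁻¹ * ((a i).1 + (a i).2) := by
    funext a i
    simp only [Function.comp, pairAvg, B, Equiv.symm_apply_apply]
    simp
  rw [h7]
  exact h6

lemma risk_double (hmeas : ∀ ℓ, Measurable (η ℓ)) (hproj : ∀ ℓ, IsProj ℓ (η ℓ)) (n : ℕ) :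
    riskAtZero η n ≤ riskAtZero η (n * 2) := by
  have hm := hmeas n
  have h := (pairAvg_mp n).lintegral_comp (f := fun w => ENNReal.ofReal (∑ i, (η n w i) ^ 2))
    (by fun_prop)
  unfold riskAtZero
  rw [← h]
  refine lintegral_mono fun z => ENNReal.ofReal_le_ofReal ?_
  set u := η n (pairAvg n z) with hu
  let v : Fin (n * 2) → ℝ := fun k => (Real.sqrt 2)⁻¹ * u (finProdFinEquiv.symm k).1
  have hum : Monotone u := (hproj n _).1
  have hv : v ∈ monoCone (n * 2) := by
    intro k l hkl
    refine mul_le_mul_of_nonneg_left (hum ?_) (by positivity)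
    rw [Fin.le_def] at hkl ⊢
    simp only [finProdFinEquiv_symm_apply, Fin.coe_divNat]
    exact Nat.div_le_div_right hkl
  have h2 : ((Real.sqrt 2)⁻¹) ^ 2 = 1 / 2 := by
    rw [inv_pow, Real.sq_sqrt (by norm_num)]; norm_num
  have hs : ∀ g : Fin (n * 2) → ℝ, ∑ k, g k = ∑ i : Fin n,
      (g (finProdFinEquiv (i, 0)) + g (finProdFinEquiv (i, 1))) := by
    intro g
    rw [← finProdFinEquiv.sum_comp, Fintype.sum_prod_type]
    simp
  have h3 : ∑ k, v k ^ 2 = ∑ i, u i ^ 2 := by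
    rw [hs]
    refine Finset.sum_congr rfl fun i _ => ?_
    simp only [v, Equiv.symm_apply_apply, mul_pow, h2]
    ring
  have h4 : ∑ k, z k * v k = ∑ i, pairAvg n z i * u i := by
    rw [hs]
    refine Finset.sum_congr rfl fun i _ => ?_
    simp only [v, Equiv.symm_apply_apply, pairAvg]
    ring
  rw [← h3]
  refine sq_le_of_dot _ _ ?_
  refine le_trans ?_ (proj_cone (hproj (n * 2)) z v hv)
  rw [h3, h4]
  exact proj_self (hproj n) _

end part2

section part3

/-- extension by zero to all of `ℕ` -/
def extz {n : ℕ} (z : Fin n → ℝ) (k : ℕ) : ℝ := if h : k < n then z ⟨k, h⟩ else 0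

def walk {n : ℕ} (z : Fin n → ℝ) (k : ℕ) : ℝ := ∑ i ∈ Finset.range k, extz z i

def runMax {n : ℕ} (z : Fin n → ℝ) : ℕ → ℝ
  | 0 => 0
  | k + 1 => max (runMax z k) (walk z (k + 1))

lemma runMax_nonneg {n : ℕ} (z : Fin n → ℝ) (k : ℕ) : 0 ≤ runMax z k := by
  induction k with
  | zero => exact le_rfl
  | succ k ih => exact le_max_of_le_left ih

lemma runMax_mono {n : ℕ} (z : Fin n → ℝ) : Monotone (runMax z) :=
  monotone_nat_of_le_succ fun _ => le_max_left _ _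

lemma walk_le_runMax {n : ℕ} (z : Fin n → ℝ) (k : ℕ) : walk z k ≤ runMax z k := by
  cases k with
  | zero => simp [walk, runMax]
  | succ k => exact le_max_right _ _

lemma walk_congr {n : ℕ} (z z' : Fin n → ℝ) (k : ℕ) (h : ∀ i < k, extz z i = extz z' i) :
    walk z k = walk z' k :=
  Finset.sum_congr rfl fun i hi => h i (Finset.mem_range.1 hi)

lemma runMax_congr {n : ℕ} (z z' : Fin n → ℝ) (k : ℕ) (h : ∀ i < k, extz z i = extz z' i) :
    runMax z k = runMax z' k := by
  induction k with
  | zero => rfl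
  | succ k ih =>
    simp only [runMax]
    rw [ih fun i hi => h i (by omega), walk_congr z z' (k + 1) h]

def flipAt {n : ℕ} (k : ℕ) (z : Fin n → ℝ) : Fin n → ℝ := fun i =>
  if (i : ℕ) = k then - z i else z i

lemma gauss_neg : MeasurePreserving (fun x : ℝ => -x) (gaussianReal 0 1) (gaussianReal 0 1) := by
  refine ⟨by fun_prop, ?_⟩
  simpa using gaussianReal_map_neg (μ := 0) (v := 1)

lemma flipAt_mp (n k : ℕ) :
    MeasurePreserving (flipAt k) (_root_.stdGaussian n) (_root_.stdGaussian n) := by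
  refine measurePreserving_pi (fun _ : Fin n => gaussianReal 0 1) (fun _ => gaussianReal 0 1)
    (f := fun i x => if (i : ℕ) = k then - x else x) (fun i => ?_)
  by_cases h : (i : ℕ) = k
  · simp only [h, if_true]; exact gauss_neg
  · simp only [h, if_false]; exact MeasurePreserving.id _

lemma neg_mp (n : ℕ) :
    MeasurePreserving (fun (z : Fin n → ℝ) i => - z i)
      (_root_.stdGaussian n) (_root_.stdGaussian n) :=
  measurePreserving_pi (fun _ : Fin n => gaussianReal 0 1) (fun _ => gaussianReal 0 1)
    (fun _ => gauss_neg)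

lemma rev_mp (n : ℕ) :
    MeasurePreserving (fun (z : Fin n → ℝ) i => z (Fin.rev i))
      (_root_.stdGaussian n) (_root_.stdGaussian n) := by
  refine ⟨by fun_prop, ?_⟩
  refine (Measure.pi_eq fun s hs => ?_).symm
  rw [Measure.map_apply (by fun_prop) (MeasurableSet.univ_pi hs)]
  have : (fun (z : Fin n → ℝ) i => z (Fin.rev i)) ⁻¹' (Set.univ.pi s)
      = Set.univ.pi (fun i => s (Fin.rev i)) := by
    ext z
    simp only [Set.mem_preimage, Set.mem_univ_pi]
    exact ⟨fun h i => by simpa using h (Fin.rev i), fun h i => by simpa using h (Fin.rev i)⟩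
  rw [this]
  unfold _root_.stdGaussian
  rw [Measure.pi_pi]
  exact Equiv.prod_comp Fin.revPerm (fun i => (gaussianReal 0 1) (s i))

lemma extz_flip_lt {n : ℕ} (z : Fin n → ℝ) (k i : ℕ) (h : i ≠ k) :
    extz (flipAt k z) i = extz z i := by
  simp [extz, flipAt, h]

lemma extz_flip_self {n : ℕ} (z : Fin n → ℝ) (k : ℕ) :
    extz (flipAt k z) k = - extz z k := by
  by_cases h : k < n <;> simp [extz, flipAt, h]

@[fun_prop]
lemma extz_meas (n k : ℕ) : Measurable (fun z : Fin n → ℝ => extz z k) := by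
  unfold extz
  split_ifs <;> fun_prop

@[fun_prop]
lemma walk_meas (n k : ℕ) : Measurable (fun z : Fin n → ℝ => walk z k) := by
  unfold walk
  fun_prop

@[fun_prop]
lemma runMax_meas (n k : ℕ) : Measurable (fun z : Fin n → ℝ => runMax z k) := by
  induction k with
  | zero => exact measurable_const
  | succ k ih => exact ih.max (walk_meas n (k + 1))

lemma extz_memLp (n k : ℕ) :
    MemLp (fun z : Fin n → ℝ => extz z k) 2 (_root_.stdGaussian n) := by
  by_cases h : k < n
  · simp only [extz, h, dite_true]
    exact (memLp_id_gaussianReal' 2 (by simp)).comp_measurePreserving (stdG_eval n ⟨k, h⟩)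
  · simp only [extz, h, dite_false]
    exact MemLp.zero'

lemma walk_memLp (n k : ℕ) :
    MemLp (fun z : Fin n → ℝ => walk z k) 2 (_root_.stdGaussian n) := by
  unfold walk
  exact memLp_finsetSum _ fun i _ => extz_memLp n i

lemma runMax_memLp (n k : ℕ) :
    MemLp (fun z : Fin n → ℝ => runMax z k) 2 (_root_.stdGaussian n) := by
  induction k with
  | zero => exact MemLp.zero'
  | succ k ih => exact MemLp.sup ih (walk_memLp n (k + 1))

lemma extz_sq (n k : ℕ) : ∫ z, extz z k ^ 2 ∂(_root_.stdGaussian n) ≤ 1 := by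
  by_cases h : k < n
  · simp only [extz, h, dite_true]
    have h1 := stdG_sq n ⟨k, h⟩
    rw [integral_eq_lintegral_of_nonneg_ae (ae_of_all _ fun _ => sq_nonneg _)
      (Measurable.aestronglyMeasurable (by fun_prop)), h1]
    simp
  · simp [extz, h]

lemma flip_integral (n k : ℕ) (F : (Fin n → ℝ) → ℝ) (hF : Measurable F)
    (hinv : ∀ z, F (flipAt k z) = F z) :
    ∫ z, F z * extz z k ∂(_root_.stdGaussian n) = 0 := by
  have hm : AEStronglyMeasurable (fun z : Fin n → ℝ => F z * extz z k)
      (Measure.map (flipAt k) (_root_.stdGaussian n)) := by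
    apply Measurable.aestronglyMeasurable; fun_prop
  have h1 := integral_map (flipAt_mp n k).measurable.aemeasurable hm
  rw [(flipAt_mp n k).map_eq] at h1
  simp only [hinv, extz_flip_self, mul_neg] at h1
  rw [integral_neg] at h1
  linarith

lemma walk_flip {n : ℕ} (k : ℕ) (z : Fin n → ℝ) : walk (flipAt k z) k = walk z k :=
  walk_congr _ _ _ fun i hi => extz_flip_lt z k i (by omega)

lemma runMax_flip {n : ℕ} (k : ℕ) (z : Fin n → ℝ) : runMax (flipAt k z) k = runMax z k :=
  runMax_congr _ _ _ fun i hi => extz_flip_lt z k i (by omega)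

lemma walk_succ {n : ℕ} (z : Fin n → ℝ) (k : ℕ) : walk z (k + 1) = walk z k + extz z k :=
  Finset.sum_range_succ _ _

lemma walk_sq (n k : ℕ) : ∫ z, walk z k ^ 2 ∂(_root_.stdGaussian n) ≤ k := by
  induction k with
  | zero => simp [walk]
  | succ k ih =>
    have h1 : ∀ z : Fin n → ℝ, walk z (k + 1) ^ 2
        = walk z k ^ 2 + (2 * (walk z k * extz z k) + extz z k ^ 2) := by
      intro z; rw [walk_succ]; ring
    simp_rw [h1]
    have i1 := (walk_memLp n k).integrable_sq
    have i2 := (walk_memLp n k).integrable_mul (extz_memLp n k)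
    have i2' : Integrable (fun z : Fin n → ℝ => walk z k * extz z k) (_root_.stdGaussian n) := i2
    have i3 := (extz_memLp n k).integrable_sq
    have i4 : Integrable (fun z : Fin n → ℝ => 2 * (walk z k * extz z k) + extz z k ^ 2)
      (_root_.stdGaussian n) := (i2'.const_mul 2).add i3
    rw [integral_add i1 i4, integral_add (i2'.const_mul 2) i3,
      integral_const_mul, flip_integral n k _ (walk_meas n k) (walk_flip k)]
    have := extz_sq n k
    push_cast
    linarith

lemma doob_aux (n k : ℕ) :
    ∫ z, (runMax z k ^ 2 - 2 * (runMax z k * walk z k)) ∂(_root_.stdGaussian n) ≤ 0 := by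
  have hintegr : ∀ k j, Integrable (fun z : Fin n → ℝ => runMax z k * walk z j)
    (_root_.stdGaussian n) := fun k j => (runMax_memLp n k).integrable_mul (walk_memLp n j)
  have hsq : ∀ k, Integrable (fun z : Fin n → ℝ => runMax z k ^ 2)
    (_root_.stdGaussian n) := fun k => (runMax_memLp n k).integrable_sq
  have hext : Integrable (fun z : Fin n → ℝ => runMax z k * extz z k)
    (_root_.stdGaussian n) := (runMax_memLp n k).integrable_mul (extz_memLp n k)
  induction k with
  | zero => simp [runMax]
  | succ k ih =>
    have hext : Integrable (fun z : Fin n → ℝ => runMax z k * extz z k)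
      (_root_.stdGaussian n) := (runMax_memLp n k).integrable_mul (extz_memLp n k)
    specialize ih hext
    have h1 : ∀ z : Fin n → ℝ, runMax z (k + 1) ^ 2 - 2 * (runMax z (k + 1) * walk z (k + 1))
        ≤ (runMax z k ^ 2 - 2 * (runMax z k * walk z k)) - 2 * (runMax z k * extz z k) := by
      intro z
      have h2 : (runMax z k ^ 2 - 2 * (runMax z k * walk z k)) - 2 * (runMax z k * extz z k)
        = runMax z k ^ 2 - 2 * (runMax z k * walk z (k + 1)) := by rw [walk_succ]; ring
      rw [h2]
      simp only [runMax]
      rcases le_total (runMax z k) (walk z (k + 1)) with h | h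
      · rw [max_eq_right h]; nlinarith [sq_nonneg (runMax z k - walk z (k + 1))]
      · rw [max_eq_left h]
    calc _ ≤ ∫ z, ((runMax z k ^ 2 - 2 * (runMax z k * walk z k)) - 2 * (runMax z k * extz z k))
          ∂(_root_.stdGaussian n) :=
          integral_mono ((hsq _).sub ((hintegr _ _).const_mul 2))
            (((hsq _).sub ((hintegr _ _).const_mul 2)).sub (hext.const_mul 2)) h1
      _ = ∫ z, (runMax z k ^ 2 - 2 * (runMax z k * walk z k)) ∂(_root_.stdGaussian n) := by
          have i5 : Integrable (fun z : Fin n → ℝ =>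
            runMax z k ^ 2 - 2 * (runMax z k * walk z k)) (_root_.stdGaussian n) :=
              (hsq _).sub ((hintegr _ _).const_mul 2)
          rw [integral_sub i5 (hext.const_mul 2),
            integral_const_mul, flip_integral n k _ (runMax_meas n k) (runMax_flip k)]
          simp
      _ ≤ 0 := ih

lemma doob (n k : ℕ) : ∫ z, runMax z k ^ 2 ∂(_root_.stdGaussian n) ≤ 4 * k := by
  have hintegr : Integrable (fun z : Fin n → ℝ => runMax z k * walk z k)
    (_root_.stdGaussian n) := (runMax_memLp n k).integrable_mul (walk_memLp n k)
  have hsq : Integrable (fun z : Fin n → ℝ => runMax z k ^ 2)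
    (_root_.stdGaussian n) := (runMax_memLp n k).integrable_sq
  have hw : Integrable (fun z : Fin n → ℝ => walk z k ^ 2)
    (_root_.stdGaussian n) := (walk_memLp n k).integrable_sq
  have i1 : Integrable (fun z : Fin n → ℝ => runMax z k ^ 2 - 2 * (runMax z k * walk z k))
    (_root_.stdGaussian n) := hsq.sub (hintegr.const_mul 2)
  calc _ ≤ ∫ z, (2 * (runMax z k ^ 2 - 2 * (runMax z k * walk z k)) + 4 * walk z k ^ 2)
        ∂(_root_.stdGaussian n) :=
        integral_mono hsq ((i1.const_mul 2).add (hw.const_mul 4)) fun z => by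
          simp only
          nlinarith [sq_nonneg (runMax z k - 2 * walk z k)]
    _ ≤ _ := by
        rw [integral_add (i1.const_mul 2) (hw.const_mul 4), integral_const_mul, integral_const_mul]
        have := doob_aux n k
        have := walk_sq n k
        linarith

end part3

section part4

lemma abel_nonneg (d u : ℕ → ℝ) (hu : Antitone u) (hu0 : ∀ t, 0 ≤ u t)
    (hd : ∀ k, 0 ≤ ∑ t ∈ Finset.range k, d t) (n : ℕ) :
    0 ≤ ∑ t ∈ Finset.range n, d t * u t := by
  have key : ∀ k, u k * ∑ t ∈ Finset.range (k + 1), d t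
      ≤ ∑ t ∈ Finset.range (k + 1), d t * u t := by
    intro k
    induction k with
    | zero => simp [mul_comm]
    | succ k ih =>
      rw [Finset.sum_range_succ _ (k + 1), Finset.sum_range_succ _ (k + 1), mul_add]
      have h1 := mul_le_mul_of_nonneg_right (hu (Nat.le_succ k)) (hd (k + 1))
      simp only [Nat.succ_eq_add_one] at h1
      linarith [mul_comm (u (k + 1)) (d (k + 1))]
  cases n with
  | zero => simp
  | succ k => exact le_trans (mul_nonneg (hu0 k) (hd _)) (key k)

/-- increments of a majorant of the walk -/
def majInc {n : ℕ} (z : Fin n → ℝ) (t : ℕ) : ℝ := 2 * runMax z (2 * (t + 1)) / ((t : ℝ) + 1)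

lemma majInc_nonneg {n : ℕ} (z : Fin n → ℝ) (t : ℕ) : 0 ≤ majInc z t :=
  div_nonneg (mul_nonneg (by norm_num) (runMax_nonneg z _)) (by positivity)

lemma walk_le_maj {n : ℕ} (z : Fin n → ℝ) (k : ℕ) :
    walk z k ≤ ∑ t ∈ Finset.range k, majInc z t := by
  rcases Nat.eq_zero_or_pos k with rfl | hk
  · simp [walk]
  have hk' : (0 : ℝ) < k := by exact_mod_cast hk
  calc walk z k ≤ runMax z k := walk_le_runMax z k
    _ ≤ ∑ t ∈ Finset.Ico (k / 2) k, 2 * runMax z k / k := by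
        rw [Finset.sum_const, Nat.card_Ico, nsmul_eq_mul]
        have h1 : (k : ℝ) ≤ 2 * ((k - k / 2 : ℕ) : ℝ) := by
          have : k ≤ 2 * (k - k / 2) := by omega
          exact_mod_cast this
        rw [← mul_div_assoc, le_div_iff₀ hk']
        nlinarith [runMax_nonneg z k]
    _ ≤ ∑ t ∈ Finset.Ico (k / 2) k, majInc z t := by
        refine Finset.sum_le_sum fun t ht => ?_
        rw [Finset.mem_Ico] at ht
        unfold majInc
        have h2 : runMax z k ≤ runMax z (2 * (t + 1)) := runMax_mono z (by omega)
        have h3 : (t : ℝ) + 1 ≤ k := by exact_mod_cast ht.2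
        have := runMax_nonneg z k
        gcongr
        linarith
    _ ≤ _ := Finset.sum_le_sum_of_subset_of_nonneg
        (by intro t ht; rw [Finset.mem_Ico] at ht; exact Finset.mem_range.2 ht.2)
        fun t _ _ => majInc_nonneg z t

lemma sum_extz {n : ℕ} (z : Fin n → ℝ) (g : ℕ → ℝ) :
    ∑ i : Fin n, g i * z i = ∑ t ∈ Finset.range n, g t * extz z t := by
  rw [Finset.sum_range]
  refine Finset.sum_congr rfl fun i _ => ?_
  simp [extz]

lemma dom_maj {n : ℕ} (z u : Fin n → ℝ) (hu : Antitone u) (hu0 : ∀ t, 0 ≤ u t) :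
    ∑ i, z i * u i ≤ ∑ i : Fin n, majInc z i * u i := by
  have h1 : ∑ i : Fin n, z i * u i = ∑ t ∈ Finset.range n, extz z t * extz u t := by
    rw [← sum_extz]
    exact Finset.sum_congr rfl fun i _ => by simp [extz]
  rw [h1, sum_extz, ← sub_nonneg, ← Finset.sum_sub_distrib]
  have h2 := abel_nonneg (fun t => majInc z t - extz z t) (extz u) ?_ ?_ ?_ n
  · simpa only [sub_mul] using h2
  · intro a b hab
    unfold extz
    split_ifs with hb ha ha
    · exact hu hab
    · omega
    · exact hu0 _
    · exact le_rfl
  · intro t; unfold extz; split_ifs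
    · exact hu0 _
    · exact le_rfl
  · intro k
    have := walk_le_maj z k
    rw [Finset.sum_sub_distrib]
    unfold walk at this
    linarith

lemma proj_maj {n : ℕ} {f : (Fin n → ℝ) → (Fin n → ℝ)} (hf : IsProj n f) (w : Fin n → ℝ) :
    ∑ i, f w i ^ 2 ≤ ∑ i : Fin n, majInc (fun j => w (Fin.rev j)) i ^ 2
      + ∑ i : Fin n, majInc (fun j => - w j) i ^ 2 := by
  have hv : Monotone (f w) := (hf w).1
  have hself := proj_self hf w
  set v := f w
  have h1 := dom_maj (fun j => w (Fin.rev j)) (fun j => max (v (Fin.rev j)) 0)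
    (fun i j hij => max_le_max_right 0 (hv (Fin.rev_le_rev.2 hij))) (fun t => le_max_right _ _)
  have h2 := dom_maj (fun j => - w j) (fun j => max (- v j) 0)
    (fun i j hij => max_le_max_right 0 (neg_le_neg (hv hij))) (fun t => le_max_right _ _)
  have h3 : ∑ i, w (Fin.rev i) * max (v (Fin.rev i)) 0 = ∑ i, w i * max (v i) 0 :=
    Equiv.sum_comp Fin.revPerm (fun i => w i * max (v i) 0)
  have h4 : ∑ i, (max (v (Fin.rev i)) 0) ^ 2 = ∑ i, (max (v i) 0) ^ 2 :=
    Equiv.sum_comp Fin.revPerm (fun i => (max (v i) 0) ^ 2)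
  have h5 : ∑ i, w i * v i = ∑ i, w i * max (v i) 0 + ∑ i, - w i * max (- v i) 0 := by
    rw [← Finset.sum_add_distrib]
    refine Finset.sum_congr rfl fun i _ => ?_
    rcases le_total (v i) 0 with h | h
    · rw [max_eq_right h, max_eq_left (by linarith)]; ring
    · rw [max_eq_left h, max_eq_right (by linarith)]; ring
  have h6 : ∑ i, v i ^ 2 = ∑ i, (max (v i) 0) ^ 2 + ∑ i, (max (- v i) 0) ^ 2 := by
    rw [← Finset.sum_add_distrib]
    refine Finset.sum_congr rfl fun i _ => ?_
    rcases le_total (v i) 0 with h | h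
    · rw [max_eq_right h, max_eq_left (by linarith)]; ring
    · rw [max_eq_left h, max_eq_right (by linarith)]; ring
  have am : ∀ g u : Fin n → ℝ, 2 * ∑ i, g i * u i ≤ ∑ i, g i ^ 2 + ∑ i, u i ^ 2 := by
    intro g u
    rw [Finset.mul_sum, ← Finset.sum_add_distrib]
    exact Finset.sum_le_sum fun i _ => by nlinarith [sq_nonneg (g i - u i)]
  have a1 := am (fun i => majInc (fun j => w (Fin.rev j)) i) (fun j => max (v (Fin.rev j)) 0)
  have a2 := am (fun i => majInc (fun j => - w j) i) (fun j => max (- v j) 0)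
  linarith

lemma maj_lint (n t : ℕ) :
    ∫⁻ z : Fin n → ℝ, ENNReal.ofReal (majInc z t ^ 2) ∂(_root_.stdGaussian n)
      ≤ ENNReal.ofReal (32 * (1 / ((t : ℝ) + 1))) := by
  have hsq : Integrable (fun z : Fin n → ℝ => runMax z (2 * (t + 1)) ^ 2)
    (_root_.stdGaussian n) := (runMax_memLp n _).integrable_sq
  have h1 : ∀ z : Fin n → ℝ, majInc z t ^ 2
      = (4 / ((t : ℝ) + 1) ^ 2) * runMax z (2 * (t + 1)) ^ 2 := by
    intro z; unfold majInc; field_simp; ring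
  simp_rw [h1]
  rw [← ofReal_integral_eq_lintegral_ofReal (hsq.const_mul _)
    (ae_of_all _ fun z => by positivity)]
  refine ENNReal.ofReal_le_ofReal ?_
  rw [integral_const_mul]
  have h2 := doob n (2 * (t + 1))
  push_cast at h2
  calc _ ≤ (4 / ((t : ℝ) + 1) ^ 2) * (4 * (2 * ((t : ℝ) + 1))) := by gcongr
    _ = _ := by field_simp; norm_num

lemma majInc_meas (n t : ℕ) : Measurable (fun z : Fin n → ℝ => majInc z t) := by
  unfold majInc
  exact ((runMax_meas n _).const_mul 2).div_const _

lemma maj_sum_lint (n : ℕ) :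
    ∫⁻ z : Fin n → ℝ, ENNReal.ofReal (∑ i : Fin n, majInc z i ^ 2) ∂(_root_.stdGaussian n)
      ≤ ENNReal.ofReal (32 * ∑ i : Fin n, (1 / ((i : ℝ) + 1))) := by
  have : ∀ z : Fin n → ℝ, ENNReal.ofReal (∑ i : Fin n, majInc z i ^ 2)
      = ∑ i : Fin n, ENNReal.ofReal (majInc z i ^ 2) :=
    fun w => ENNReal.ofReal_sum_of_nonneg fun i _ => sq_nonneg _
  simp_rw [this]
  rw [lintegral_finsetSum _ (fun (i : Fin n) _ => ((majInc_meas n i).pow_const 2).ennreal_ofReal),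
    Finset.mul_sum, ENNReal.ofReal_sum_of_nonneg fun i _ => by positivity]
  exact Finset.sum_le_sum fun i _ => maj_lint n i

lemma risk_log (η : ∀ ℓ : ℕ, (Fin ℓ → ℝ) → (Fin ℓ → ℝ))
    (hproj : ∀ ℓ, IsProj ℓ (η ℓ)) (n : ℕ) :
    riskAtZero η n ≤ ENNReal.ofReal (64 * (1 + Real.log n)) := by
  have hm : Measurable (fun z : Fin n → ℝ => ENNReal.ofReal (∑ i : Fin n, majInc z i ^ 2)) :=
    (Finset.measurable_sum _ fun (i : Fin n) _ => (majInc_meas n i).pow_const 2).ennreal_ofReal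
  have h1 := (rev_mp n).lintegral_comp hm
  have h2 := (neg_mp n).lintegral_comp hm
  have h3 := maj_sum_lint n
  have hH : ∑ i : Fin n, (1 / ((i : ℝ) + 1)) ≤ 1 + Real.log n := by
    have h := harmonic_le_one_add_log n
    unfold harmonic at h
    push_cast at h
    rw [Finset.sum_range] at h
    simpa only [one_div] using h
  have hH0 : 0 ≤ ∑ i : Fin n, (1 / ((i : ℝ) + 1)) := Finset.sum_nonneg fun i _ => by positivity
  calc riskAtZero η n
      ≤ ∫⁻ w, (ENNReal.ofReal (∑ i : Fin n, majInc (fun j => w (Fin.rev j)) i ^ 2)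
          + ENNReal.ofReal (∑ i : Fin n, majInc (fun j => - w j) i ^ 2))
          ∂(_root_.stdGaussian n) := by
        refine lintegral_mono fun w => ?_
        rw [← ENNReal.ofReal_add (Finset.sum_nonneg fun i _ => sq_nonneg _)
          (Finset.sum_nonneg fun i _ => sq_nonneg _)]
        exact ENNReal.ofReal_le_ofReal (proj_maj (hproj n) w)
    _ ≤ ENNReal.ofReal (32 * ∑ i : Fin n, (1 / ((i : ℝ) + 1)))
        + ENNReal.ofReal (32 * ∑ i : Fin n, (1 / ((i : ℝ) + 1))) := by
        have hm' : Measurable (fun w : Fin n → ℝ =>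
            ENNReal.ofReal (∑ i : Fin n, majInc (fun j => w (Fin.rev j)) i ^ 2)) :=
          hm.comp (rev_mp n).measurable
        rw [lintegral_add_left hm', h1, h2]
        exact add_le_add h3 h3
    _ ≤ _ := by
        rw [← ENNReal.ofReal_add (by positivity) (by positivity)]
        refine ENNReal.ofReal_le_ofReal ?_
        linarith

end part4

section part5

open Classical in
lemma incCount_eq (N : ℕ) (x : Fin N → ℝ) :
    incCount N x = ∑ i : Fin N, ∑ j : Fin N,
      if (i : ℕ) + 1 = (j : ℕ) ∧ x i < x j then 1 else 0 := by
  unfold incCount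
  rw [Nat.card_eq_fintype_card, Fintype.card_subtype, Finset.card_filter, Fintype.sum_prod_type]

open Classical in
lemma incCount_add (m n : ℕ) (x : Fin (m + n) → ℝ) :
    incCount (m + n) x = incCount m (fun i => x (Fin.castAdd n i))
      + incCount n (fun i => x (Fin.natAdd m i))
      + ∑ i : Fin m, ∑ j : Fin n,
        if (i : ℕ) + 1 = m + (j : ℕ) ∧ x (Fin.castAdd n i) < x (Fin.natAdd m j)
          then 1 else 0 := by
  rw [incCount_eq, incCount_eq, incCount_eq, Fin.sum_univ_add]
  simp_rw [Fin.sum_univ_add]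
  simp only [Fin.val_castAdd, Fin.val_natAdd, Finset.sum_add_distrib]
  have h0 : ∑ i : Fin n, ∑ j : Fin m, (if m + (i : ℕ) + 1 = (j : ℕ) ∧
      x (Fin.natAdd m i) < x (Fin.castAdd n j) then 1 else 0) = 0 := by
    refine Finset.sum_eq_zero fun i _ => Finset.sum_eq_zero fun j _ => ?_
    rw [if_neg]
    rintro ⟨h, _⟩
    have := j.2
    omega
  have h1 : ∀ i j : Fin n, (m + (i : ℕ) + 1 = m + (j : ℕ)) ↔ ((i : ℕ) + 1 = j) := by
    intro i j; omega
  simp only [h1]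
  rw [h0]
  ring

lemma incCount_add_le (m n : ℕ) (x : Fin (m + n) → ℝ) :
    incCount (m + n) x ≤ incCount m (fun i => x (Fin.castAdd n i))
      + incCount n (fun i => x (Fin.natAdd m i)) + 1 := by
  classical
  rw [incCount_add]
  gcongr
  rw [← Fintype.sum_prod_type' (f := fun (i : Fin m) (j : Fin n) =>
    if (i : ℕ) + 1 = m + (j : ℕ) ∧ x (Fin.castAdd n i) < x (Fin.natAdd m j) then 1 else 0),
    ← Finset.card_filter, Finset.card_le_one]
  rintro ⟨a, b⟩ h ⟨c, d⟩ h'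
  simp only [Finset.mem_filter, Finset.mem_univ, true_and] at h h'
  have := a.2; have := c.2
  ext <;> simp only <;> omega

lemma incCount_add_ge (m n : ℕ) (x : Fin (m + n) → ℝ) (i : Fin m) (j : Fin n)
    (hij : (i : ℕ) + 1 = m + (j : ℕ)) (hx : x (Fin.castAdd n i) < x (Fin.natAdd m j)) :
    incCount m (fun i => x (Fin.castAdd n i))
      + incCount n (fun i => x (Fin.natAdd m i)) + 1 ≤ incCount (m + n) x := by
  classical
  rw [incCount_add]
  gcongr
  refine le_trans ?_ (Finset.single_le_sum (fun _ _ => Nat.zero_le _) (Finset.mem_univ i))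
  refine le_trans ?_ (Finset.single_le_sum (fun _ _ => Nat.zero_le _) (Finset.mem_univ j))
  rw [if_pos ⟨hij, hx⟩]

lemma append_meas (m n : ℕ) :
    Measurable (fun p : (Fin m → ℝ) × (Fin n → ℝ) => Fin.append p.1 p.2) := by
  rw [measurable_pi_iff]
  intro k
  refine Fin.addCases (fun i => ?_) (fun i => ?_) k
  · simp only [Fin.append_left]; fun_prop
  · simp only [Fin.append_right]; fun_prop

lemma append_mp (m n : ℕ) :
    MeasurePreserving (fun p : (Fin m → ℝ) × (Fin n → ℝ) => Fin.append p.1 p.2)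
      ((_root_.stdGaussian m).prod (_root_.stdGaussian n)) (_root_.stdGaussian (m + n)) := by
  refine ⟨append_meas m n, ?_⟩
  refine (Measure.pi_eq fun s hs => ?_).symm
  rw [Measure.map_apply (append_meas m n) (MeasurableSet.univ_pi hs), Fin.prod_univ_add]
  have : (fun p : (Fin m → ℝ) × (Fin n → ℝ) => (Fin.append p.1 p.2 : Fin (m + n) → ℝ)) ⁻¹'
      (Set.univ.pi s)
      = (Set.univ.pi fun i => s (Fin.castAdd n i)) ×ˢ (Set.univ.pi fun i => s (Fin.natAdd m i)) := by
    ext p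
    simp only [Set.mem_preimage, Set.mem_univ_pi, Set.mem_prod]
    constructor
    · intro h
      exact ⟨fun i => by simpa using h (Fin.castAdd n i), fun i => by simpa using h (Fin.natAdd m i)⟩
    · intro h k
      refine Fin.addCases (fun i => ?_) (fun i => ?_) k
      · simpa using h.1 i
      · simpa using h.2 i
  rw [this, Measure.prod_prod]
  unfold _root_.stdGaussian
  rw [Measure.pi_pi, Measure.pi_pi]

lemma left_mp (m n : ℕ) :
    MeasurePreserving (fun (z : Fin (m + n) → ℝ) i => z (Fin.castAdd n i))
      (_root_.stdGaussian (m + n)) (_root_.stdGaussian m) := by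
  have hm : Measurable (fun (z : Fin (m + n) → ℝ) (i : Fin m) => z (Fin.castAdd n i)) := by fun_prop
  refine ⟨hm, ?_⟩
  rw [← (append_mp m n).map_eq, Measure.map_map hm (append_meas m n)]
  have : ((fun (z : Fin (m + n) → ℝ) (i : Fin m) => z (Fin.castAdd n i)) ∘
    fun p : (Fin m → ℝ) × (Fin n → ℝ) => (Fin.append p.1 p.2 : Fin (m + n) → ℝ)) = Prod.fst := by
    funext p i; simp
  rw [this]
  exact measurePreserving_fst.map_eq

lemma right_mp (m n : ℕ) :
    MeasurePreserving (fun (z : Fin (m + n) → ℝ) i => z (Fin.natAdd m i))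
      (_root_.stdGaussian (m + n)) (_root_.stdGaussian n) := by
  have hm : Measurable (fun (z : Fin (m + n) → ℝ) (i : Fin n) => z (Fin.natAdd m i)) := by fun_prop
  refine ⟨hm, ?_⟩
  rw [← (append_mp m n).map_eq, Measure.map_map hm (append_meas m n)]
  have : ((fun (z : Fin (m + n) → ℝ) (i : Fin n) => z (Fin.natAdd m i)) ∘
    fun p : (Fin m → ℝ) × (Fin n → ℝ) => (Fin.append p.1 p.2 : Fin (m + n) → ℝ)) = Prod.snd := by
    funext p i; simp
  rw [this]
  exact measurePreserving_snd.map_eq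

lemma mono_of_adj {N : ℕ} (v : Fin N → ℝ)
    (h : ∀ i j : Fin N, (i : ℕ) + 1 = j → v i ≤ v j) : Monotone v := by
  cases N with
  | zero => exact Subsingleton.monotone v
  | succ n => exact Fin.monotone_iff_le_succ.2 fun i => h _ _ (by simp)

lemma exists_G (η : ∀ ℓ : ℕ, (Fin ℓ → ℝ) → (Fin ℓ → ℝ))
    (hmeas : ∀ ℓ, Measurable (η ℓ)) (hproj : ∀ ℓ, IsProj ℓ (η ℓ)) (a b : ℝ≥0∞)
    (hab : ∀ ℓ : ℕ, 1 ≤ ℓ → riskAtZero η ℓ ≤ a + b * ℓ) :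
    ∀ N : ℕ, 1 ≤ N → ∀ x : Fin N → ℝ, Monotone x →
    ∃ G : (Fin N → ℝ) → (Fin N → ℝ), Measurable G ∧
      (∀ z v : Fin N → ℝ, (∀ i j : Fin N, (i : ℕ) + 1 = j → x i = x j → v i ≤ v j) →
        ∑ i, z i * v i ≤ ∑ i, G z i * v i) ∧
      ∫⁻ z, ENNReal.ofReal (∑ i, (G z i) ^ 2) ∂(_root_.stdGaussian N)
        ≤ a * ((incCount N x : ℝ≥0∞) + 1) + b * N := by
  intro N
  induction N using Nat.strong_induction_on with
  | _ N ih =>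
  intro hN x hx
  by_cases hc : ∀ i j : Fin N, (i : ℕ) + 1 = j → x i = x j
  · refine ⟨η N, hmeas N, fun z v hv => proj_cone (hproj N) z v
      (mono_of_adj v fun i j hij => hv i j hij (hc i j hij)), ?_⟩
    refine le_trans (hab N hN) ?_
    gcongr
    calc a = a * 1 := (mul_one a).symm
      _ ≤ _ := by gcongr; exact le_add_self
  · push Not at hc
    obtain ⟨i, j, hij, hne⟩ := hc
    have hi := i.2
    have hj := j.2
    obtain ⟨m, n, hm, hn, hNe, him⟩ : ∃ m n, 1 ≤ m ∧ 1 ≤ n ∧ N = m + n ∧ (i : ℕ) + 1 = m :=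
      ⟨(i : ℕ) + 1, N - ((i : ℕ) + 1), by omega, by omega, by omega, rfl⟩
    subst hNe
    obtain ⟨G1, hG1, hd1, hl1⟩ := ih m (by omega) hm (fun i => x (Fin.castAdd n i))
      (fun k l hkl => hx (Fin.le_def.2 (by
        have := Fin.le_def.1 hkl
        simp only [Fin.val_castAdd, Fin.val_natAdd]
        omega)))
    obtain ⟨G2, hG2, hd2, hl2⟩ := ih n (by omega) hn (fun i => x (Fin.natAdd m i))
      (fun k l hkl => hx (Fin.le_def.2 (by
        have := Fin.le_def.1 hkl
        simp only [Fin.val_castAdd, Fin.val_natAdd]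
        omega)))
    have hlt : x i < x j := lt_of_le_of_ne (hx (Fin.le_def.2 (by omega))) hne
    have hinc := incCount_add_ge m n x ⟨i, by omega⟩ ⟨0, by omega⟩ (by simp [him]) (by
      have e1 : Fin.castAdd n (⟨(i : ℕ), by omega⟩ : Fin m) = i := Fin.ext rfl
      have e2 : Fin.natAdd m (⟨0, by omega⟩ : Fin n) = j := Fin.ext (by simp; omega)
      rw [e1, e2]
      exact hlt)
    refine ⟨fun z => Fin.append (G1 fun i => z (Fin.castAdd n i)) (G2 fun i => z (Fin.natAdd m i)),
      ?_, ?_, ?_⟩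
    · exact (append_meas m n).comp ((hG1.comp (left_mp m n).measurable).prodMk
        (hG2.comp (right_mp m n).measurable))
    · intro z v hv
      rw [Fin.sum_univ_add, Fin.sum_univ_add]
      simp only [Fin.append_left, Fin.append_right]
      refine add_le_add (hd1 (fun i => z (Fin.castAdd n i)) (fun i => v (Fin.castAdd n i)) ?_)
        (hd2 (fun i => z (Fin.natAdd m i)) (fun i => v (Fin.natAdd m i)) ?_)
      · intro k l hkl hxx
        exact hv _ _ (by simpa using hkl) hxx
      · intro k l hkl hxx
        exact hv _ _ (by simp; omega) hxx
    · simp only [Fin.sum_univ_add, Fin.append_left, Fin.append_right]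
      have e1 : ∀ z : Fin (m + n) → ℝ,
        ENNReal.ofReal (∑ k, (G1 (fun i => z (Fin.castAdd n i)) k) ^ 2
          + ∑ k, (G2 (fun i => z (Fin.natAdd m i)) k) ^ 2)
        = ENNReal.ofReal (∑ k, (G1 (fun i => z (Fin.castAdd n i)) k) ^ 2)
          + ENNReal.ofReal (∑ k, (G2 (fun i => z (Fin.natAdd m i)) k) ^ 2) := fun z =>
        ENNReal.ofReal_add (Finset.sum_nonneg fun i _ => sq_nonneg _)
          (Finset.sum_nonneg fun i _ => sq_nonneg _)
      simp_rw [e1]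
      have m1 : Measurable (fun w : Fin m → ℝ => ENNReal.ofReal (∑ k, (G1 w k) ^ 2)) := by fun_prop
      have m2 : Measurable (fun w : Fin n → ℝ => ENNReal.ofReal (∑ k, (G2 w k) ^ 2)) := by fun_prop
      have m1' : Measurable (fun z : Fin (m + n) → ℝ =>
        ENNReal.ofReal (∑ k, (G1 (fun i => z (Fin.castAdd n i)) k) ^ 2)) :=
        m1.comp (left_mp m n).measurable
      rw [lintegral_add_left m1', (left_mp m n).lintegral_comp m1, (right_mp m n).lintegral_comp m2]
      refine le_trans (add_le_add hl1 hl2) ?_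
      have hinc' : ((incCount m fun i => x (Fin.castAdd n i) : ℕ) : ℝ≥0∞)
        + ((incCount n fun i => x (Fin.natAdd m i) : ℕ) : ℝ≥0∞) + 1
        ≤ (incCount (m + n) x : ℝ≥0∞) := by exact_mod_cast hinc
      push_cast
      calc _ = a * ((((incCount m fun i => x (Fin.castAdd n i) : ℕ) : ℝ≥0∞)
        + ((incCount n fun i => x (Fin.natAdd m i) : ℕ) : ℝ≥0∞) + 1) + 1) + b * (m + n) := by ring
        _ ≤ _ := by gcongr

lemma mse_upper (η : ∀ ℓ : ℕ, (Fin ℓ → ℝ) → (Fin ℓ → ℝ))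
    (hmeas : ∀ ℓ, Measurable (η ℓ)) (hproj : ∀ ℓ, IsProj ℓ (η ℓ)) (a b : ℝ≥0∞)
    (ha : a ≠ ∞) (hab : ∀ ℓ : ℕ, 1 ≤ ℓ → riskAtZero η ℓ ≤ a + b * ℓ) (N : ℕ) (hN : 1 ≤ N)
    (ε : ℝ) : monoMSE η N ε ≤ a * ENNReal.ofReal ε + b + a * (N : ℝ≥0∞)⁻¹ := by
  have hN0 : (N : ℝ≥0∞) ≠ 0 := by simp; omega
  have hNt : (N : ℝ≥0∞) ≠ ∞ := by simp
  unfold monoMSE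
  have key : (⨆ ν ∈ monoClass N ε,
      ∫⁻ p, ENNReal.ofReal (∑ i, (p.1 i - η N (p.1 + p.2) i) ^ 2)
        ∂(ν.prod (_root_.stdGaussian N))) ≤ a * (N * ENNReal.ofReal ε + 1) + b * N := by
    refine iSup₂_le fun ν hν => ?_
    obtain ⟨hp, hsupp, hcount⟩ := hν
    have hm := hmeas N
    have hmm : Measurable (fun p : (Fin N → ℝ) × (Fin N → ℝ) =>
      ENNReal.ofReal (∑ i, (p.1 i - η N (p.1 + p.2) i) ^ 2)) := by fun_prop
    rw [lintegral_prod _ hmm.aemeasurable]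
    have hae : ∀ᵐ x ∂ν, x ∈ monoCone N := by
      rw [ae_iff]; exact hsupp
    calc _ ≤ ∫⁻ x, (a * ((incCount N x : ℝ≥0∞) + 1) + b * N) ∂ν := by
          refine lintegral_mono_ae ?_
          filter_upwards [hae] with x hx
          obtain ⟨G, hG, hd, hl⟩ := exists_G η hmeas hproj a b hab N hN x hx
          refine le_trans (lintegral_mono fun z => ENNReal.ofReal_le_ofReal ?_) hl
          exact err_bound (hproj N) x z (G z) hx (hd z)
      _ = a * (∫⁻ x, (incCount N x : ℝ≥0∞) ∂ν + 1) + b * N := by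
          rw [lintegral_add_right _ measurable_const, lintegral_const_mul' _ _ ha,
            lintegral_add_right _ measurable_const]
          simp
      _ ≤ _ := by gcongr
  calc _ ≤ (N : ℝ≥0∞)⁻¹ * (a * (N * ENNReal.ofReal ε + 1) + b * N) := by gcongr
    _ = (N * (N : ℝ≥0∞)⁻¹) * (a * ENNReal.ofReal ε) + (N * (N : ℝ≥0∞)⁻¹) * b
        + a * (N : ℝ≥0∞)⁻¹ := by ring
    _ = _ := by rw [ENNReal.mul_inv_cancel hN0 hNt]; simp

end part5

section part6

variable (η : ∀ ℓ : ℕ, (Fin ℓ → ℝ) → (Fin ℓ → ℝ))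

def riskAt (N : ℕ) (x : Fin N → ℝ) : ℝ≥0∞ :=
  ∫⁻ z, ENNReal.ofReal (∑ i, (x i - η N (x + z) i) ^ 2) ∂(_root_.stdGaussian N)

def worstRisk (N k : ℕ) : ℝ≥0∞ :=
  ⨆ (x : Fin N → ℝ) (_ : Monotone x ∧ incCount N x ≤ k), riskAt η N x

lemma castAdd_le_iff' {m n : ℕ} (i j : Fin m) : Fin.castAdd n i ≤ Fin.castAdd n j ↔ i ≤ j := by
  rw [Fin.le_def, Fin.le_def, Fin.val_castAdd, Fin.val_castAdd]

lemma natAdd_le_iff' {m n : ℕ} (i j : Fin n) : Fin.natAdd m i ≤ Fin.natAdd m j ↔ i ≤ j := by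
  rw [Fin.le_def, Fin.le_def, Fin.val_natAdd, Fin.val_natAdd]
  omega

lemma append_mono {m n : ℕ} (u : Fin m → ℝ) (v : Fin n → ℝ) (hu : Monotone u) (hv : Monotone v)
    (h : ∀ i j, u i ≤ v j) : Monotone (Fin.append u v : Fin (m + n) → ℝ) := by
  intro k l
  refine Fin.addCases (fun i => ?_) (fun i => ?_) k <;>
  refine Fin.addCases (fun j => ?_) (fun j => ?_) l <;> intro hkl <;>
    simp only [Fin.append_left, Fin.append_right]
  · exact hu ((castAdd_le_iff' _ _).1 hkl)
  · exact h i j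
  · rw [Fin.le_def] at hkl
    simp only [Fin.val_castAdd, Fin.val_natAdd] at hkl
    have := j.2
    omega
  · exact hv ((natAdd_le_iff' _ _).1 hkl)

lemma eventually_sep {m n : ℕ} (u : Fin m → ℝ) (v : Fin n → ℝ) :
    ∀ᶠ τ : ℕ in atTop, ∀ i j, u i ≤ v j + τ := by
  rw [eventually_all]
  intro i
  rw [eventually_all]
  intro j
  obtain ⟨T, hT⟩ := exists_nat_ge (u i - v j)
  filter_upwards [eventually_ge_atTop T] with τ hτ
  have : (T : ℝ) ≤ τ := by exact_mod_cast hτ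
  linarith

lemma incCount_shift (n : ℕ) (x : Fin n → ℝ) (τ : ℝ) :
    incCount n (fun i => x i + τ) = incCount n x := by
  unfold incCount
  simp

lemma riskAt_superadd (hmeas : ∀ ℓ, Measurable (η ℓ)) (hproj : ∀ ℓ, IsProj ℓ (η ℓ))
    (m n k l : ℕ) (x : Fin m → ℝ) (y : Fin n → ℝ) (hx : Monotone x) (hy : Monotone y)
    (hk : incCount m x ≤ k) (hl : incCount n y ≤ l) :
    riskAt η m x + riskAt η n y ≤ worstRisk η (m + n) (k + l + 1) := by
  have hm1 := hmeas m
  have hm2 := hmeas n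
  have hm3 := hmeas (m + n)
  let X : ℕ → Fin (m + n) → ℝ := fun τ => Fin.append x (fun j => y j + τ)
  let F : ℕ → (Fin (m + n) → ℝ) → ℝ≥0∞ := fun τ z =>
    ENNReal.ofReal (∑ i, (X τ i - η (m + n) (X τ + z) i) ^ 2)
  have hF : ∀ τ, Measurable (F τ) := by
    intro τ
    simp only [F]
    fun_prop
  have hev : ∀ᶠ τ : ℕ in atTop, ∫⁻ z, F τ z ∂(_root_.stdGaussian (m + n))
      ≤ worstRisk η (m + n) (k + l + 1) := by
    filter_upwards [eventually_sep x y] with τ hτ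
    refine le_iSup₂_of_le (X τ) ⟨append_mono _ _ hx (fun i j hij => by
      simpa using hy hij) hτ, ?_⟩ le_rfl
    refine le_trans (incCount_add_le m n (X τ)) ?_
    simp only [X, Fin.append_left, Fin.append_right, incCount_shift]
    have : incCount m (fun i => x i) ≤ k := hk
    omega
  -- pointwise limit
  let A : (Fin m → ℝ) → ℝ≥0∞ := fun w => ENNReal.ofReal (∑ i, (x i - η m (x + w) i) ^ 2)
  let B : (Fin n → ℝ) → ℝ≥0∞ := fun w => ENNReal.ofReal (∑ i, (y i - η n (y + w) i) ^ 2)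
  have hA : Measurable A := by simp only [A]; fun_prop
  have hB : Measurable B := by simp only [B]; fun_prop
  have hpt : ∀ z : Fin (m + n) → ℝ, A (fun i => z (Fin.castAdd n i)) + B (fun i => z (Fin.natAdd m i))
      ≤ liminf (fun τ => F τ z) atTop := by
    intro z
    set z1 : Fin m → ℝ := fun i => z (Fin.castAdd n i) with hz1
    set z2 : Fin n → ℝ := fun i => z (Fin.natAdd m i) with hz2
    refine le_liminf_of_le ?_ ?_
    · exact isCobounded_ge_of_top
    filter_upwards [eventually_sep (η m (x + z1)) (η n (y + z2))] with τ hτ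
    have hproj' : η (m + n) (X τ + z)
        = Fin.append (η m (x + z1)) (fun j => η n (y + z2) j + τ) := by
      refine proj_unique (hproj (m + n)) _ _ (append_mono _ _ (hproj m _).1
        (fun i j hij => by simpa using (hproj n (y + z2)).1 hij) hτ) ?_
      intro v hv
      rw [Fin.sum_univ_add, Fin.sum_univ_add]
      simp only [Fin.append_left, Fin.append_right, X, Pi.add_apply]
      have b1 := (hproj m (x + z1)).2 (fun i => v (Fin.castAdd n i))
        (fun i j hij => hv ((castAdd_le_iff' _ _).2 hij))
      have b2 := (hproj n (y + z2)).2 (fun i => v (Fin.natAdd m i) - τ)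
        (fun i j hij => by
          have := hv ((natAdd_le_iff' (m := m) _ _).2 hij)
          simpa using this)
      refine add_le_add ?_ ?_
      · simpa [hz1] using b1
      · calc _ = ∑ i, ((y + z2) i - η n (y + z2) i) ^ 2 :=
              Finset.sum_congr rfl fun i _ => by simp only [Pi.add_apply, hz2]; ring
          _ ≤ _ := b2
          _ = _ := Finset.sum_congr rfl fun i _ => by simp only [Pi.add_apply, hz2]; ring
    simp only [F, hproj', A, B]
    rw [← ENNReal.ofReal_add (Finset.sum_nonneg fun i _ => sq_nonneg _)
          (Finset.sum_nonneg fun i _ => sq_nonneg _), Fin.sum_univ_add]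
    simp only [X, Fin.append_left, Fin.append_right, add_sub_add_right_eq_sub]
    exact le_rfl
  have hA' : Measurable (fun z : Fin (m + n) → ℝ => A (fun i => z (Fin.castAdd n i))) :=
    hA.comp (left_mp m n).measurable
  calc riskAt η m x + riskAt η n y
      = ∫⁻ z : Fin (m + n) → ℝ, (A (fun i => z (Fin.castAdd n i)) +
          B (fun i => z (Fin.natAdd m i))) ∂(_root_.stdGaussian (m + n)) := by
        rw [lintegral_add_left hA', (left_mp m n).lintegral_comp hA, (right_mp m n).lintegral_comp hB]
        rfl
    _ ≤ ∫⁻ z, liminf (fun τ => F τ z) atTop ∂(_root_.stdGaussian (m + n)) :=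
        lintegral_mono hpt
    _ ≤ liminf (fun τ => ∫⁻ z, F τ z ∂(_root_.stdGaussian (m + n))) atTop :=
        lintegral_liminf_le hF
    _ ≤ _ := by
        refine liminf_le_of_frequently_le' ?_
        exact hev.frequently

lemma incCount_zero (n : ℕ) : incCount n (0 : Fin n → ℝ) = 0 := by
  unfold incCount
  simp

lemma worstRisk_list (hmeas : ∀ ℓ, Measurable (η ℓ)) (hproj : ∀ ℓ, IsProj ℓ (η ℓ))
    (s : ℕ) (ls : List ℕ) :
    (ls.map (riskAtZero η)).sum ≤ worstRisk η (ls.sum + s) ls.length := by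
  induction ls with
  | nil => simp
  | cons ℓ ls ih =>
    have h0 : riskAtZero η ℓ = riskAt η ℓ 0 := by
      unfold riskAtZero riskAt
      simp
    simp only [List.map_cons, List.sum_cons, List.length_cons]
    refine le_trans (add_le_add_right ih _) ?_
    rw [h0, add_assoc ℓ]
    conv_lhs => rw [worstRisk]
    rw [add_comm, ENNReal.iSup_add]
    refine iSup_le fun x => ?_
    by_cases hx : Monotone x ∧ incCount (ls.sum + s) x ≤ ls.length
    · rw [iSup_pos hx, add_comm]
      have := riskAt_superadd η hmeas hproj ℓ (ls.sum + s) 0 ls.length 0 x monotone_const hx.1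
        (incCount_zero ℓ).le hx.2
      rwa [zero_add] at this
    · rw [iSup_neg hx, bot_eq_zero, zero_add]
      have := riskAt_superadd η hmeas hproj ℓ (ls.sum + s) 0 ls.length 0 0 monotone_const
        monotone_const (incCount_zero ℓ).le ((incCount_zero _).le.trans (Nat.zero_le _))
      rw [zero_add] at this
      exact le_trans le_self_add this

lemma worstRisk_le_mse (hmeas : ∀ ℓ, Measurable (η ℓ)) (N k : ℕ) (ε : ℝ)
    (hk : (k : ℝ) ≤ N * ε) : (N : ℝ≥0∞)⁻¹ * worstRisk η N k ≤ monoMSE η N ε := by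
  unfold monoMSE
  gcongr
  refine iSup₂_le fun x hx => ?_
  refine le_iSup₂_of_le (Measure.dirac x) ⟨inferInstance, ?_, ?_⟩ ?_
  · have hc : MeasurableSet (monoCone N) := by
      have : monoCone N = ⋂ (i : Fin N) (j : Fin N) (_ : i ≤ j), {x : Fin N → ℝ | x i ≤ x j} := by
        ext x
        simp only [Set.mem_iInter, Set.mem_ofPred_eq]
        rfl
      rw [this]
      refine MeasurableSet.iInter fun i => MeasurableSet.iInter fun j => MeasurableSet.iInter fun _ =>
        measurableSet_le (by fun_prop) (by fun_prop)
    rw [Measure.dirac_apply' _ hc.compl]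
    have : x ∈ monoCone N := hx.1
    simp [this]
  · rw [lintegral_dirac]
    calc (incCount N x : ℝ≥0∞) ≤ (k : ℝ≥0∞) := by exact_mod_cast hx.2
      _ = ENNReal.ofReal k := by simp
      _ ≤ ENNReal.ofReal (N * ε) := ENNReal.ofReal_le_ofReal hk
      _ = _ := by rw [ENNReal.ofReal_mul (by positivity)]; simp
  · have hm := hmeas N
    have hmm : Measurable (fun p : (Fin N → ℝ) × (Fin N → ℝ) =>
      ENNReal.ofReal (∑ i, (p.1 i - η N (p.1 + p.2) i) ^ 2)) := by fun_prop
    rw [lintegral_prod _ hmm.aemeasurable, lintegral_dirac]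
    exact le_rfl

end part6

section part7

lemma max_attained (u : ℕ → ℝ) (l : ℝ) (hu : Tendsto u atTop (nhds l)) (n1 : ℕ) (h1 : l ≤ u n1) :
    ∃ n0, ∀ n, u n ≤ u n0 := by
  by_cases h : ∀ n, u n ≤ u n1
  · exact ⟨n1, h⟩
  push Not at h
  obtain ⟨n2, h2⟩ := h
  have hev : ∀ᶠ n in atTop, u n < u n2 := hu.eventually (gt_mem_nhds (lt_of_le_of_lt h1 h2))
  obtain ⟨K, hK⟩ := eventually_atTop.1 hev
  obtain ⟨n0, -, hn0⟩ := Finset.exists_max_image (Finset.range (max K (n2 + 1))) u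
    ⟨n2, by simp⟩
  refine ⟨n0, fun n => ?_⟩
  by_cases hn : n < max K (n2 + 1)
  · exact hn0 n (Finset.mem_range.2 hn)
  · push Not at hn
    exact (hK n (le_trans (le_max_left _ _) hn)).le.trans (hn0 n2 (by simp))

lemma support_line (r : ℕ → ℝ) (L : ℝ) (hL : 1 < L) (r0 : ∀ n, 0 ≤ r n) (r1 : r 1 = 1)
    (rn : ∀ n, r n ≤ n) (rlim : Tendsto (fun n : ℕ => r n / n) atTop (nhds 0))
    (r2 : ∀ n, r n ≤ r (n * 2)) :
    ∃ (p q : ℕ) (a b : ℝ), 1 ≤ p ∧ (p : ℝ) < L ∧ L ≤ q ∧ 0 ≤ a ∧ 0 ≤ b ∧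
      (∀ ℓ : ℕ, 1 ≤ ℓ → r ℓ ≤ a + b * ℓ) ∧
      (q - L) * r p + (L - p) * r q = (q - p) * (a + b * L) := by
  let c : ℕ → ℕ → ℝ := fun p q => ((q - L) * r p + (L - p) * r q) / (q - p)
  have hpow : ∀ p k, r p ≤ r (p * 2 ^ k) := by
    intro p k
    induction k with
    | zero => simp
    | succ k ih => rw [pow_succ, ← mul_assoc]; exact ih.trans (r2 _)
  have hexq : ∀ p : ℕ, 1 ≤ p → (p : ℝ) < L → ∃ q : ℕ, L ≤ q ∧ r p ≤ c p q ∧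
      ∀ q' : ℕ, L ≤ q' → c p q' ≤ c p q := by
    intro p hp hpL
    have hlim : Tendsto (fun q : ℕ => c p q) atTop (nhds (r p)) := by
      have hinv : Tendsto (fun n : ℕ => ((n : ℝ))⁻¹) atTop (nhds 0) :=
        tendsto_inv_atTop_nhds_zero_nat
      have h1 : Tendsto (fun q : ℕ => ((1 - L * (q : ℝ)⁻¹) * r p + (L - p) * (r q / q))
          / (1 - p * (q : ℝ)⁻¹)) atTop
          (nhds (((1 - L * 0) * r p + (L - p) * 0) / (1 - p * 0))) := by
        refine Tendsto.div ?_ ?_ (by simp)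
        · exact ((tendsto_const_nhds.sub (hinv.const_mul _)).mul_const _).add (rlim.const_mul _)
        · exact tendsto_const_nhds.sub (hinv.const_mul _)
      have e : ((1 - L * 0) * r p + (L - p) * 0) / (1 - p * 0) = r p := by simp
      rw [e] at h1
      refine h1.congr' ?_
      filter_upwards [eventually_gt_atTop p] with q hq
      have hq' : (p : ℝ) < q := by exact_mod_cast hq
      have hp0 : (0 : ℝ) ≤ p := by positivity
      have hq0 : (q : ℝ) ≠ 0 := by linarith
      have hqp : (q : ℝ) - p ≠ 0 := by linarith
      simp only [c]
      have : 1 - (p : ℝ) * (q : ℝ)⁻¹ = (q - p) / q := by field_simp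
      rw [this]
      field_simp
    -- a point with large value
    obtain ⟨k, hk⟩ := pow_unbounded_of_one_lt L (one_lt_two)
    have hbig : L ≤ ((p * 2 ^ k : ℕ) : ℝ) := by
      push_cast
      have : (1 : ℝ) ≤ p := by exact_mod_cast hp
      nlinarith [pow_pos (two_pos : (0 : ℝ) < 2) k]
    have hc1 : r p ≤ c p (p * 2 ^ k) := by
      simp only [c]
      rw [le_div_iff₀ (by linarith)]
      nlinarith [hpow p k]
    have hQ : ∀ q : ℕ, L ≤ q ↔ ⌈L⌉₊ ≤ q := fun q => Nat.ceil_le.symm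
    obtain ⟨n0, hn0⟩ := max_attained (fun n => c p (n + ⌈L⌉₊)) (r p)
      ((tendsto_add_atTop_iff_nat _).2 hlim) (p * 2 ^ k - ⌈L⌉₊) (by
        rw [Nat.sub_add_cancel ((hQ _).1 hbig)]
        exact hc1)
    have hall : ∀ q' : ℕ, L ≤ q' → c p q' ≤ c p (n0 + ⌈L⌉₊) := by
      intro q' hq'
      have := hn0 (q' - ⌈L⌉₊)
      rwa [Nat.sub_add_cancel ((hQ _).1 hq')] at this
    exact ⟨n0 + ⌈L⌉₊, (hQ _).2 (Nat.le_add_left _ _), hc1.trans (hall _ hbig), hall⟩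
  choose! Q hQ1 hQ2 hQ3 using hexq
  let S := (Finset.Icc 1 ⌈L⌉₊).filter (fun p : ℕ => (p : ℝ) < L)
  have hS : ∀ p : ℕ, p ∈ S ↔ 1 ≤ p ∧ (p : ℝ) < L := by
    intro p
    simp only [S, Finset.mem_filter, Finset.mem_Icc]
    constructor
    · rintro ⟨⟨h1, -⟩, h2⟩; exact ⟨h1, h2⟩
    · rintro ⟨h1, h2⟩
      exact ⟨⟨h1, by exact_mod_cast h2.le.trans (Nat.le_ceil L)⟩, h2⟩
  have h1S : 1 ∈ S := (hS 1).2 ⟨le_rfl, by simpa using hL⟩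
  obtain ⟨p, hpS, hp⟩ := Finset.exists_max_image S (fun p => c p (Q p)) ⟨1, h1S⟩
  obtain ⟨hp1, hpL⟩ := (hS p).1 hpS
  set C := c p (Q p) with hC
  have hmax : ∀ p' q' : ℕ, 1 ≤ p' → (p' : ℝ) < L → L ≤ q' → c p' q' ≤ C := fun p' q' h1 h2 h3 =>
    (hQ3 p' h1 h2 q' h3).trans (hp p' ((hS p').2 ⟨h1, h2⟩))
  have hmax2 : ∀ p' : ℕ, 1 ≤ p' → (p' : ℝ) < L → r p' ≤ C := fun p' h1 h2 =>
    (hQ2 p' h1 h2).trans (hp p' ((hS p').2 ⟨h1, h2⟩))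
  obtain ⟨m, hmS, hm⟩ := Finset.exists_min_image S (fun ℓ => (C - r ℓ) / (L - ℓ)) ⟨1, h1S⟩
  obtain ⟨hm1, hmL⟩ := (hS m).1 hmS
  set b := (C - r m) / (L - m) with hb
  have hqp : (0 : ℝ) < Q p - p := by have := hQ1 p hp1 hpL; linarith
  have hCL : C ≤ L := by
    rw [hC]
    simp only [c]
    rw [div_le_iff₀ hqp]
    have g1 := rn p
    have g2 := rn (Q p)
    have := hQ1 p hp1 hpL
    nlinarith [mul_le_mul_of_nonneg_left g1 (sub_nonneg.2 this),
      mul_le_mul_of_nonneg_left g2 (sub_nonneg.2 hpL.le)]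
  have hb0 : 0 ≤ b := div_nonneg (by linarith [hmax2 m hm1 hmL]) (by linarith)
  have hb1 : b ≤ (C - 1) / (L - 1) := by
    have := hm 1 h1S
    simpa [r1] using this
  have hb1' : b * (L - 1) ≤ C - 1 := (le_div_iff₀ (by linarith)).1 hb1
  have hble1 : b ≤ 1 := by
    refine hb1.trans ?_
    rw [div_le_one (by linarith)]
    linarith
  refine ⟨p, Q p, C - b * L, b, hp1, hpL, hQ1 p hp1 hpL, by nlinarith, hb0, ?_, ?_⟩
  · intro ℓ hℓ
    rcases lt_or_ge (ℓ : ℝ) L with h | h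
    · have := hm ℓ ((hS ℓ).2 ⟨hℓ, h⟩)
      have h' : b * (L - ℓ) ≤ C - r ℓ := (le_div_iff₀ (by linarith)).1 this
      linarith
    · have hc := hmax m ℓ hm1 hmL h
      simp only [c] at hc
      rw [div_le_iff₀ (by linarith)] at hc
      have hbm : b * (L - m) = C - r m := by
        rw [hb]; field_simp [(by linarith : L - m ≠ 0)]
      have hLm : 0 < L - m := by linarith
      have : (L - m) * r ℓ ≤ (L - m) * (C - b * L + b * ℓ) := by
        have e : r m = C - b * (L - m) := by linarith
        rw [e] at hc
        nlinarith
      exact le_of_mul_le_mul_left this hLm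
  · have : C * (Q p - p) = (Q p - L) * r p + (L - p) * r (Q p) := by
      rw [hC]; simp only [c]; field_simp
    linarith

end part7

section part8
section final
variable (η : ∀ ℓ : ℕ, (Fin ℓ → ℝ) → (Fin ℓ → ℝ))

lemma val_le (a b : ℝ≥0∞) (hab : ∀ ℓ : ℕ, 1 ≤ ℓ → riskAtZero η ℓ ≤ a + b * ℓ) (ε : ℝ)
    (hε : 0 < ε) : monoMinimaxVal η ε ≤ a * ENNReal.ofReal ε + b := by
  unfold monoMinimaxVal
  refine iSup₂_le fun π hπ => ?_
  obtain ⟨h0, h1, h2⟩ := hπ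
  have key : ∑' ℓ, π ℓ * riskAtZero η ℓ ≤ a + b * ENNReal.ofReal (1 / ε) := by
    calc ∑' ℓ, π ℓ * riskAtZero η ℓ ≤ ∑' ℓ : ℕ, (a * π ℓ + b * ((ℓ : ℝ≥0∞) * π ℓ)) := by
          refine ENNReal.tsum_le_tsum fun ℓ => ?_
          rcases Nat.eq_zero_or_pos ℓ with h | h
          · simp [h, h0]
          · calc π ℓ * riskAtZero η ℓ ≤ π ℓ * (a + b * ℓ) := by gcongr; exact hab ℓ h
              _ = _ := by ring
      _ = _ := by rw [ENNReal.tsum_add, ENNReal.tsum_mul_left, ENNReal.tsum_mul_left, h1, h2, mul_one]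
  calc ENNReal.ofReal ε * ∑' ℓ, π ℓ * riskAtZero η ℓ
      ≤ ENNReal.ofReal ε * (a + b * ENNReal.ofReal (1 / ε)) := by gcongr
    _ = a * ENNReal.ofReal ε + b * (ENNReal.ofReal ε * ENNReal.ofReal (1 / ε)) := by ring
    _ = _ := by
      rw [← ENNReal.ofReal_mul hε.le, mul_one_div_cancel hε.ne', ENNReal.ofReal_one, mul_one]

lemma two_point (p q : ℕ) (A B : ℝ≥0∞) (f : ℕ → ℝ≥0∞) :
    ∑' ℓ, (Pi.single p A + Pi.single q B : ℕ → ℝ≥0∞) ℓ * f ℓ = A * f p + B * f q := by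
  simp only [Pi.add_apply, add_mul]
  rw [ENNReal.tsum_add]
  congr 1
  · rw [tsum_eq_single p fun x hx => by simp [hx]]; simp
  · rw [tsum_eq_single q fun x hx => by simp [hx]]; simp

lemma final_ii (hproj : ∀ ℓ, IsProj ℓ (η ℓ)) :
    ∃ ε₀ : ℝ, 0 < ε₀ ∧ ∀ ε : ℝ, 0 < ε → ε ≤ ε₀ →
      monoMinimaxVal η ε ≤ ENNReal.ofReal (20 * ε * Real.log (1 / ε) ^ 2) := by
  refine ⟨Real.exp (-5), Real.exp_pos _, fun ε hε hle => ?_⟩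
  have hlog : 5 ≤ Real.log (1 / ε) := by
    rw [one_div, Real.log_inv]
    have := Real.log_le_log hε hle
    rw [Real.log_exp] at this
    linarith
  set Λ := Real.log (1 / ε) with hΛ
  have h := val_le η (ENNReal.ofReal (64 * Λ)) (ENNReal.ofReal (64 * ε)) (fun ℓ hℓ => by
    refine (risk_log η hproj ℓ).trans ?_
    have e : (ℓ : ℝ≥0∞) = ENNReal.ofReal ℓ := by simp
    rw [e, ← ENNReal.ofReal_mul (by positivity), ← ENNReal.ofReal_add (by positivity) (by positivity)]
    refine ENNReal.ofReal_le_ofReal ?_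
    have hl : (0 : ℝ) < ℓ := by exact_mod_cast hℓ
    have := Real.log_le_sub_one_of_pos (mul_pos hε hl)
    rw [Real.log_mul hε.ne' hl.ne'] at this
    have h2 : Λ = - Real.log ε := by rw [hΛ, one_div, Real.log_inv]
    nlinarith) ε hε
  refine h.trans ?_
  rw [← ENNReal.ofReal_mul (by positivity), ← ENNReal.ofReal_add (by positivity) (by positivity)]
  refine ENNReal.ofReal_le_ofReal ?_
  have : 64 * Λ + 64 ≤ 20 * Λ ^ 2 := by nlinarith
  nlinarith

lemma final_i (hmeas : ∀ ℓ, Measurable (η ℓ)) (hproj : ∀ ℓ, IsProj ℓ (η ℓ)) (ε : ℝ)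
    (hε : 0 < ε) (hε1 : ε < 1) :
    Tendsto (fun N : ℕ => monoMSE η N ε) atTop (nhds (monoMinimaxVal η ε)) ∧
      ∃ π : ℕ → ℝ≥0∞,
        (π 0 = 0 ∧ (∑' ℓ, π ℓ) = 1 ∧
          (∑' ℓ : ℕ, (ℓ : ℝ≥0∞) * π ℓ) = ENNReal.ofReal (1 / ε)) ∧
        monoMinimaxVal η ε = ENNReal.ofReal ε * ∑' ℓ, π ℓ * riskAtZero η ℓ := by
  set r : ℕ → ℝ := fun ℓ => (riskAtZero η ℓ).toReal with hr
  have hfin : ∀ ℓ, riskAtZero η ℓ ≠ ∞ := fun ℓ =>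
    ne_top_of_le_ne_top (by simp) (risk_le η hproj ℓ)
  have hR : ∀ ℓ, riskAtZero η ℓ = ENNReal.ofReal (r ℓ) := fun ℓ =>
    (ENNReal.ofReal_toReal (hfin ℓ)).symm
  have hr0 : ∀ ℓ, 0 ≤ r ℓ := fun ℓ => ENNReal.toReal_nonneg
  have hlim : Tendsto (fun n : ℕ => r n / n) atTop (nhds 0) := by
    have hinv : Tendsto (fun n : ℕ => ((n : ℝ))⁻¹) atTop (nhds 0) :=
      tendsto_inv_atTop_nhds_zero_nat
    have hlg : Tendsto (fun n : ℕ => Real.log n / n) atTop (nhds 0) :=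
      (Real.isLittleO_log_id_atTop.tendsto_div_nhds_zero).comp tendsto_natCast_atTop_atTop
    have hs : Tendsto (fun n : ℕ => 64 * ((n : ℝ)⁻¹ + Real.log n / n)) atTop (nhds 0) := by
      simpa using (hinv.add hlg).const_mul 64
    refine squeeze_zero (fun n => by have := hr0 n; positivity) (fun n => ?_) hs
    have h := risk_log η hproj n
    have hl : 0 ≤ Real.log n := Real.log_natCast_nonneg n
    have h' : r n ≤ 64 * (1 + Real.log n) := ENNReal.toReal_le_of_le_ofReal (by positivity) h
    calc r n / n ≤ 64 * (1 + Real.log n) / n := by gcongr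
      _ = _ := by ring
  obtain ⟨p, q, a, b, hp1, hpL, hqL, ha, hb, hline, hval⟩ := support_line r (1 / ε)
    (by rw [one_div]; exact (one_lt_inv₀ hε).2 hε1) hr0
    (by simp only [hr, risk_one η hproj, ENNReal.toReal_one])
    (fun n => by
      have := ENNReal.toReal_mono (by simp) (risk_le η hproj n)
      simpa using this) hlim
    (fun n => ENNReal.toReal_mono (hfin _) (risk_double η hmeas hproj n))
  have hqp : (0 : ℝ) < q - p := by linarith
  have hpq : p < q := by exact_mod_cast (by linarith : (p : ℝ) < q)
  set θ : ℝ := (q - 1 / ε) / (q - p) with hθ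
  have hθ0 : 0 ≤ θ := div_nonneg (by linarith) hqp.le
  have hθ' : 1 - θ = (1 / ε - p) / (q - p) := by rw [hθ]; field_simp; ring
  have hθ1 : 0 ≤ 1 - θ := by rw [hθ']; exact div_nonneg (by linarith) hqp.le
  have hmean : θ * p + (1 - θ) * q = 1 / ε := by
    rw [hθ', hθ]
    rw [div_mul_eq_mul_div, div_mul_eq_mul_div, ← add_div, div_eq_iff hqp.ne']
    ring
  have hvalue : θ * r p + (1 - θ) * r q = a + b * (1 / ε) := by
    rw [hθ', hθ]
    rw [div_mul_eq_mul_div, div_mul_eq_mul_div, ← add_div, div_eq_iff hqp.ne']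
    rw [hval]; ring
  have hab : ∀ ℓ : ℕ, 1 ≤ ℓ → riskAtZero η ℓ ≤ ENNReal.ofReal a + ENNReal.ofReal b * ℓ := by
    intro ℓ hℓ
    have e : (ℓ : ℝ≥0∞) = ENNReal.ofReal ℓ := by simp
    rw [hR, e, ← ENNReal.ofReal_mul hb, ← ENNReal.ofReal_add ha (by positivity)]
    exact ENNReal.ofReal_le_ofReal (hline ℓ hℓ)
  have hV : ENNReal.ofReal a * ENNReal.ofReal ε + ENNReal.ofReal b
      = ENNReal.ofReal (ε * (θ * r p + (1 - θ) * r q)) := by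
    rw [hvalue, ← ENNReal.ofReal_mul ha, ← ENNReal.ofReal_add (by positivity) hb]
    congr 1
    field_simp
  let π : ℕ → ℝ≥0∞ := Pi.single p (ENNReal.ofReal θ) + Pi.single q (ENNReal.ofReal (1 - θ))
  have hπ : π 0 = 0 ∧ (∑' ℓ, π ℓ) = 1 ∧
          (∑' ℓ : ℕ, (ℓ : ℝ≥0∞) * π ℓ) = ENNReal.ofReal (1 / ε) := by
    refine ⟨?_, ?_, ?_⟩
    · have h1 : (0 : ℕ) ≠ p := by omega
      have h2 : (0 : ℕ) ≠ q := by omega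
      simp [π, h1, h2]
    · have := two_point p q (ENNReal.ofReal θ) (ENNReal.ofReal (1 - θ)) (fun _ => 1)
      simp only [mul_one] at this
      rw [← ENNReal.ofReal_add hθ0 hθ1] at this
      simpa [π] using this
    · have := two_point p q (ENNReal.ofReal θ) (ENNReal.ofReal (1 - θ)) (fun ℓ => (ℓ : ℝ≥0∞))
      simp only [← ENNReal.ofReal_natCast] at this
      rw [← ENNReal.ofReal_mul hθ0, ← ENNReal.ofReal_mul hθ1,
        ← ENNReal.ofReal_add (by positivity) (by positivity), hmean] at this
      simp only [ENNReal.ofReal_natCast] at this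
      rw [← this]
      exact tsum_congr fun ℓ => mul_comm _ _
  have hπv : ENNReal.ofReal ε * ∑' ℓ, π ℓ * riskAtZero η ℓ
      = ENNReal.ofReal (ε * (θ * r p + (1 - θ) * r q)) := by
    have h1 := hr0 p
    have h2 := hr0 q
    rw [two_point, hR, hR, ← ENNReal.ofReal_mul hθ0, ← ENNReal.ofReal_mul hθ1,
        ← ENNReal.ofReal_add (by positivity) (by positivity), ← ENNReal.ofReal_mul hε.le]
  have hmm : monoMinimaxVal η ε = ENNReal.ofReal (ε * (θ * r p + (1 - θ) * r q)) := by
    refine le_antisymm ((val_le η _ _ hab ε hε).trans hV.le) ?_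
    rw [← hπv]
    exact le_iSup₂_of_le π hπ le_rfl
  refine ⟨?_, π, hπ, hmm.trans hπv.symm⟩
  rw [hmm]
  -- lower sequence
  let v : ℕ → ℝ := fun N => (⌊ε * θ * N⌋₊ : ℝ) / N * r p + (⌊ε * (1 - θ) * N⌋₊ : ℝ) / N * r q
  have hv : Tendsto (fun N => ENNReal.ofReal (v N)) atTop
      (nhds (ENNReal.ofReal (ε * (θ * r p + (1 - θ) * r q)))) := by
    refine ENNReal.tendsto_ofReal ?_
    have e : ε * (θ * r p + (1 - θ) * r q) = ε * θ * r p + ε * (1 - θ) * r q := by ring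
    rw [e]
    have f1 := (tendsto_nat_floor_mul_div_atTop (R := ℝ) (a := ε * θ) (by positivity)).comp
      (tendsto_natCast_atTop_atTop (R := ℝ))
    have f2 := (tendsto_nat_floor_mul_div_atTop (R := ℝ) (a := ε * (1 - θ)) (by positivity)).comp
      (tendsto_natCast_atTop_atTop (R := ℝ))
    exact (f1.mul_const _).add (f2.mul_const _)
  have hup : Tendsto (fun N : ℕ => ENNReal.ofReal a * ENNReal.ofReal ε + ENNReal.ofReal b
      + ENNReal.ofReal a * (N : ℝ≥0∞)⁻¹) atTop
      (nhds (ENNReal.ofReal (ε * (θ * r p + (1 - θ) * r q)))) := by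
    rw [hV]
    have h0 := ENNReal.Tendsto.const_mul ENNReal.tendsto_inv_nat_nhds_zero
      (Or.inr (ENNReal.ofReal_ne_top (r := a)))
    rw [mul_zero] at h0
    simpa using (tendsto_const_nhds (x := ENNReal.ofReal (ε * (θ * r p + (1 - θ) * r q)))).add h0
  refine tendsto_of_tendsto_of_tendsto_of_le_of_le' hv hup ?_ ?_
  · filter_upwards [eventually_ge_atTop 1] with N hN
    have hN0 : (0 : ℝ) < N := by exact_mod_cast hN
    set n1 := ⌊ε * θ * N⌋₊ with hn1
    set n2 := ⌊ε * (1 - θ) * N⌋₊ with hn2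
    have b1 : (n1 : ℝ) ≤ ε * θ * N := Nat.floor_le (by positivity)
    have b2 : (n2 : ℝ) ≤ ε * (1 - θ) * N := Nat.floor_le (by positivity)
    have hsum : n1 * p + n2 * q ≤ N := by
      have : ((n1 * p + n2 * q : ℕ) : ℝ) ≤ N := by
        push_cast
        calc (n1 : ℝ) * p + n2 * q ≤ ε * θ * N * p + ε * (1 - θ) * N * q := by gcongr
          _ = ε * N * (θ * p + (1 - θ) * q) := by ring
          _ = N := by rw [hmean]; field_simp
      exact_mod_cast this
    have hlen : ((n1 + n2 : ℕ) : ℝ) ≤ N * ε := by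
      push_cast
      nlinarith
    have hw := worstRisk_list η hmeas hproj (N - (n1 * p + n2 * q))
      (List.replicate n1 p ++ List.replicate n2 q)
    simp only [List.map_append, List.map_replicate, List.sum_append, List.sum_replicate,
      List.length_append, List.length_replicate, smul_eq_mul, nsmul_eq_mul] at hw
    rw [Nat.add_sub_cancel' hsum] at hw
    refine le_trans ?_ (worstRisk_le_mse η hmeas N (n1 + n2) ε hlen)
    refine le_trans ?_ (mul_le_mul_right hw _)
    have g1 := hr0 p
    have g2 := hr0 q
    have e0 : ENNReal.ofReal (v N) = ENNReal.ofReal ((N : ℝ)⁻¹ * (n1 * r p + n2 * r q)) := by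
      congr 1
      simp only [v]
      ring
    rw [e0, ENNReal.ofReal_mul (by positivity), ENNReal.ofReal_inv_of_pos hN0,
      ENNReal.ofReal_add (by positivity) (by positivity), ENNReal.ofReal_mul (by positivity),
      ENNReal.ofReal_mul (by positivity), hR, hR]
    simp
  · filter_upwards [eventually_ge_atTop 1] with N hN
    exact mse_upper η hmeas hproj _ _ ENNReal.ofReal_ne_top hab N hN ε

end final
end part8

/-- **Asymptotic minimax MSE of monotone regression.**
With `η ℓ` the Euclidean projection onto the monotone cone in each dimension:
(i) for every `ε ∈ (0,1)` the limit `M(ε|MonoReg) = lim_N M(F_{N,ε,mono})`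
exists and equals `max{ ε Σ_ℓ π_ℓ r(ℓ) : Σ_ℓ ℓ π_ℓ = 1/ε }`, the maximum
being attained; (ii) there exists `ε₀ > 0` such that for all `ε ∈ (0,ε₀]`,
`M(ε|MonoReg) ≤ 20 ε (log(1/ε))²`. -/
theorem monoReg_minimax
    (η : ∀ ℓ : ℕ, (Fin ℓ → ℝ) → (Fin ℓ → ℝ))
    (hmeas : ∀ ℓ, Measurable (η ℓ))
    (hproj : ∀ (ℓ : ℕ) (y : Fin ℓ → ℝ), η ℓ y ∈ monoCone ℓ ∧
      ∀ x ∈ monoCone ℓ, (∑ i, (y i - η ℓ y i) ^ 2) ≤ ∑ i, (y i - x i) ^ 2) :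
    (∀ ε : ℝ, 0 < ε → ε < 1 →
      Tendsto (fun N : ℕ => monoMSE η N ε) atTop (nhds (monoMinimaxVal η ε)) ∧
      ∃ π : ℕ → ℝ≥0∞,
        (π 0 = 0 ∧ (∑' ℓ, π ℓ) = 1 ∧
          (∑' ℓ : ℕ, (ℓ : ℝ≥0∞) * π ℓ) = ENNReal.ofReal (1 / ε)) ∧
        monoMinimaxVal η ε = ENNReal.ofReal ε * ∑' ℓ, π ℓ * riskAtZero η ℓ) ∧
    (∃ ε₀ : ℝ, 0 < ε₀ ∧ ∀ ε : ℝ, 0 < ε → ε ≤ ε₀ →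
      monoMinimaxVal η ε ≤ ENNReal.ofReal (20 * ε * Real.log (1 / ε) ^ 2)) := by
  have hp : ∀ ℓ, IsProj ℓ (η ℓ) := fun ℓ y => hproj ℓ y
  exact ⟨fun ε h0 h1 => final_i η hmeas hp ε h0 h1, final_ii η hp⟩
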